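/- Let G be a 3-edge-connected finite simple cubic graph on n vertices whose flow polynomial F(G,t) has only real roots. Then F(G,t) has 1 as a root of multiplicity exactly 1, has 2 as a root of multiplicity exactly 1, and every other root of F(G,t) is strictly greater than 5/2. -/

import Mathlib

open Polynomial

/-- The flow polynomial of a finite simple graph `G`:
`F(G,t) = Σ_{Z ⊆ E(G)} (−1)^{m−|Z|} t^{|Z|+c(Z)−n}`, where `c(Z)` is the number of
connected components of the spanning subgraph with edge set `Z`. -/
noncomputable def flowPoly {V : Type} [Fintype V] (G : SimpleGraph V) : Polynomial ℤ :=
  ∑ Z ∈ G.edgeSet.toFinite.toFinset.powerset,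
    (-1 : ℤ) ^ (G.edgeSet.toFinite.toFinset.card - Z.card) •
      (X : Polynomial ℤ) ^
        (Z.card + Nat.card (SimpleGraph.fromEdgeSet (↑Z : Set (Sym2 V))).ConnectedComponent
          - Fintype.card V)

/-- The number of edges of `G`. -/
noncomputable def edgeCount {V : Type} [Fintype V] (G : SimpleGraph V) : ℕ :=
  G.edgeSet.toFinite.toFinset.card

namespace FlowAux
open Finset Classical

set_option linter.unusedSectionVars false

variable {V : Type} [Fintype V]

/-- neighbours of `v` along edges in `A` -/
noncomputable def nb (A : Finset (Sym2 V)) (v : V) : Finset V := univ.filter (fun y => s(v, y) ∈ A)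

/-- number of edges of `A` between `S` and `T` (for disjoint `S`, `T`) -/
noncomputable def tt (A : Finset (Sym2 V)) (S T : Finset V) : ℕ :=
  ∑ x ∈ S, ∑ y ∈ T, if s(x, y) ∈ A then 1 else 0

/-- nowhere-zero flows on `A` with values in `K` (characteristic two), conserved on `U` -/
def IsFl (K : Type) [Field K] (A : Finset (Sym2 V)) (U : Finset V) (φ : Sym2 V → K) : Prop :=
  (∀ e, φ e ≠ 0 ↔ e ∈ A) ∧ ∀ v ∈ U, ∑ y, φ s(v, y) = 0

noncomputable def fl (K : Type) [Field K] [Fintype K] (A : Finset (Sym2 V)) (U : Finset V) :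
    Finset (Sym2 V → K) := univ.filter (IsFl K A U)

noncomputable def NN (K : Type) [Field K] [Fintype K] (A : Finset (Sym2 V)) (U : Finset V) : ℕ :=
  (fl K A U).card

variable {K : Type} [Field K] [Fintype K] [CharP K 2]

lemma mem_fl {A : Finset (Sym2 V)} {U : Finset V} {φ : Sym2 V → K} :
    φ ∈ fl K A U ↔ (∀ e, φ e ≠ 0 ↔ e ∈ A) ∧ ∀ v ∈ U, ∑ y, φ s(v, y) = 0 := by
  simp [fl, IsFl]

lemma sum_update_self {v w : V} (φ : Sym2 V → K) (c : K) :
    ∑ y, Function.update φ s(v, w) c s(v, y) = ∑ y, φ s(v, y) + (c - φ s(v, w)) := by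
  have : ∀ y, Function.update φ s(v, w) c s(v, y) =
      φ s(v, y) + (if y = w then c - φ s(v, w) else 0) := by
    intro y
    by_cases h : y = w
    · subst h; simp
    · rw [Function.update_of_ne]
      · simp [h]
      · intro h'
        rw [Sym2.eq_iff] at h'
        rcases h' with h' | h'
        · exact h h'.2
        · exact h (h'.2.trans h'.1)
  simp only [this, Finset.sum_add_distrib]
  simp

lemma sum_update_ne {u v w : V} (φ : Sym2 V → K) (c : K) (h1 : u ≠ v) (h2 : u ≠ w) :
    ∑ y, Function.update φ s(v, w) c s(u, y) = ∑ y, φ s(u, y) := by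
  apply Finset.sum_congr rfl
  intro y _
  rw [Function.update_of_ne]
  intro h'
  rw [Sym2.eq_iff] at h'
  rcases h' with h' | h'
  · exact h1 h'.1
  · exact h2 h'.1

/-- deletion-contraction -/
lemma NN_dc {A : Finset (Sym2 V)} {U : Finset V} {v w : V} (hv : v ∈ U) (hw : w ∉ U)
    (he : s(v, w) ∈ A) :
    NN K A U + NN K (A.erase s(v, w)) U = NN K (A.erase s(v, w)) (U.erase v) := by
  unfold NN
  rw [← Finset.card_filter_add_card_filter_not (s := fl K (A.erase s(v, w)) (U.erase v))
    (fun φ => ∑ y, φ s(v, y) ≠ 0)]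
  congr 1
  · refine Finset.card_bij' (fun φ _ => Function.update φ s(v, w) 0)
      (fun φ _ => Function.update φ s(v, w) (∑ y, φ s(v, y))) ?_ ?_ ?_ ?_
    · intro φ hφ
      rw [mem_fl] at hφ
      rw [mem_filter, mem_fl]
      refine ⟨⟨?_, ?_⟩, ?_⟩
      · intro e
        by_cases h : e = s(v, w)
        · subst h; simp
        · rw [Function.update_of_ne h, hφ.1]; simp [h]
      · intro u hu
        rw [mem_erase] at hu
        rw [sum_update_ne _ _ hu.1 (ne_of_mem_of_not_mem hu.2 hw)]
        exact hφ.2 u hu.2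
      · rw [sum_update_self, hφ.2 v hv]
        simpa using (hφ.1 _).2 he
    · intro φ hφ
      rw [mem_filter, mem_fl] at hφ
      obtain ⟨⟨h1, h2⟩, h3⟩ := hφ
      have h0 : φ s(v, w) = 0 := by
        by_contra h
        simpa using (h1 _).1 h
      rw [mem_fl]
      refine ⟨?_, ?_⟩
      · intro e
        by_cases h : e = s(v, w)
        · subst h; simpa [he] using h3
        · rw [Function.update_of_ne h, h1]; simp [h]
      · intro u hu
        by_cases h : u = v
        · subst h
          rw [sum_update_self, h0, sub_zero, CharTwo.add_self_eq_zero]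
        · rw [sum_update_ne _ _ h (ne_of_mem_of_not_mem hu hw)]
          exact h2 u (by simp [h, hu])
    · intro φ hφ
      rw [mem_fl] at hφ
      have : ∑ y, Function.update φ s(v, w) 0 s(v, y) = φ s(v, w) := by
        rw [sum_update_self, hφ.2 v hv, zero_add, zero_sub, CharTwo.neg_eq]
      simp only [this]
      simp
    · intro φ hφ
      rw [mem_filter, mem_fl] at hφ
      obtain ⟨⟨h1, h2⟩, h3⟩ := hφ
      have h0 : φ s(v, w) = 0 := by
        by_contra h
        simpa using (h1 _).1 h
      simp only [Function.update_idem]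
      rw [← h0, Function.update_eq_self]
  · congr 1
    ext φ
    rw [mem_filter, mem_fl, mem_fl]
    constructor
    · rintro ⟨h1, h2⟩
      exact ⟨⟨h1, fun u hu => h2 u (mem_of_mem_erase hu)⟩, by simpa using h2 v hv⟩
    · rintro ⟨⟨h1, h2⟩, h3⟩
      refine ⟨h1, fun u hu => ?_⟩
      by_cases h : u = v
      · subst h; simpa using h3
      · exact h2 u (by simp [h, hu])

/-- an edge avoiding `U` is free -/
lemma NN_loop {A : Finset (Sym2 V)} {U : Finset V} {v w : V} (hv : v ∉ U) (hw : w ∉ U)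
    (he : s(v, w) ∈ A) :
    NN K A U = (Fintype.card K - 1) * NN K (A.erase s(v, w)) U := by
  unfold NN
  have hc : Fintype.card K - 1 = ((univ : Finset K).erase 0).card := by
    rw [card_erase_of_mem (mem_univ _), card_univ]
  rw [hc, ← card_product]
  refine Finset.card_bij' (fun φ _ => (φ s(v, w), Function.update φ s(v, w) 0))
      (fun p _ => Function.update p.2 s(v, w) p.1) ?_ ?_ ?_ ?_
  · intro φ hφ
    rw [mem_fl] at hφ
    rw [mem_product, mem_fl]
    refine ⟨by simpa using (hφ.1 _).2 he, ?_, ?_⟩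
    · intro e
      by_cases h : e = s(v, w)
      · subst h; simp
      · simp only [Function.update_of_ne h, hφ.1]; simp [h]
    · intro u hu
      simp only
      rw [sum_update_ne _ _ (ne_of_mem_of_not_mem hu hv) (ne_of_mem_of_not_mem hu hw)]
      exact hφ.2 u hu
  · rintro ⟨c, φ⟩ hφ
    rw [mem_product, mem_fl] at hφ
    obtain ⟨h0, h1, h2⟩ := hφ
    simp only at h0 h1 h2
    rw [mem_fl]
    refine ⟨?_, ?_⟩
    · intro e
      by_cases h : e = s(v, w)
      · subst h; simpa [he] using h0
      · simp only [Function.update_of_ne h, h1]; simp [h]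
    · intro u hu
      simp only
      rw [sum_update_ne _ _ (ne_of_mem_of_not_mem hu hv) (ne_of_mem_of_not_mem hu hw)]
      exact h2 u hu
  · intro φ _
    simp
  · rintro ⟨c, φ⟩ hφ
    rw [mem_product, mem_fl] at hφ
    obtain ⟨h0, h1, h2⟩ := hφ
    simp only at h0 h1 h2
    have h0 : φ s(v, w) = 0 := by
      by_contra h
      simpa using (h1 _).1 h
    simp only [Function.update_idem, Function.update_self, Prod.mk.injEq, true_and]
    rw [← h0, Function.update_eq_self]

/-- sum at a vertex of degree one -/
lemma sum_nb {A : Finset (Sym2 V)} {φ : Sym2 V → K} (h : ∀ e, φ e ≠ 0 ↔ e ∈ A) (v : V) :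
    ∑ y, φ s(v, y) = ∑ y ∈ nb A v, φ s(v, y) := by
  symm
  apply Finset.sum_subset (subset_univ _)
  intro y _ hy
  by_contra h'
  exact hy (by simp only [nb, mem_filter, mem_univ, true_and]; exact (h _).1 h')

lemma mem_nb {A : Finset (Sym2 V)} {v y : V} : y ∈ nb A v ↔ s(v, y) ∈ A := by simp [nb]


lemma NN_leaf {A : Finset (Sym2 V)} {U : Finset V} {v x : V} (hv : v ∈ U) (h : nb A v = {x}) :
    NN K A U = 0 := by
  unfold NN
  rw [card_eq_zero, eq_empty_iff_forall_notMem]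
  intro φ hφ
  rw [mem_fl] at hφ
  have := hφ.2 v hv
  have hx : s(v, x) ∈ A := by rw [← mem_nb, h]; simp
  rw [sum_nb hφ.1, h, sum_singleton] at this
  exact (hφ.1 _).2 hx this

lemma NN_empty : NN K (∅ : Finset (Sym2 V)) ∅ = 1 := by
  unfold NN
  rw [card_eq_one]
  refine ⟨0, ?_⟩
  ext φ
  rw [mem_fl]
  simp [funext_iff]

/-- global bridge -/
lemma NN_bridge {A : Finset (Sym2 V)} {U : Finset V} {v w : V} (hd : ∀ x, s(x, x) ∉ A)
    (hv : v ∈ U) (hw : w ∉ U)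
    (he : s(v, w) ∈ A) (huniq : ∀ x ∈ U, ∀ y, y ∉ U → s(x, y) ∈ A → x = v ∧ y = w) :
    NN K A U = 0 := by
  unfold NN
  rw [card_eq_zero, eq_empty_iff_forall_notMem]
  intro φ hφ
  rw [mem_fl] at hφ
  obtain ⟨h1, h2⟩ := hφ
  have h3 : ∑ x ∈ U, ∑ y, φ s(x, y) = 0 := sum_eq_zero h2
  have h4 : ∀ x, ∑ y, φ s(x, y) = ∑ y ∈ U, φ s(x, y) + ∑ y ∈ Uᶜ, φ s(x, y) := by
    intro x; rw [sum_add_sum_compl]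
  simp only [h4, sum_add_distrib] at h3
  have h5 : ∑ x ∈ U, ∑ y ∈ U, φ s(x, y) = 0 := by
    rw [← sum_product']
    apply Finset.sum_involution (fun p _ => (p.2, p.1))
    · rintro ⟨x, y⟩ _
      simp only
      rw [Sym2.eq_swap, CharTwo.add_self_eq_zero]
    · rintro ⟨x, y⟩ _ h h'
      simp only [Prod.mk.injEq] at h'
      obtain rfl := h'.1
      exact hd _ ((h1 _).1 h)
    · rintro ⟨x, y⟩ h
      simp only [mem_product] at h ⊢
      exact h.symm
    · rintro ⟨x, y⟩ _; rfl
  rw [h5, zero_add, sum_eq_single v, sum_eq_single w] at h3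
  · exact (h1 _).2 he h3
  · intro y hy hyw
    by_contra h
    exact hyw (huniq v hv y (by simpa using hy) ((h1 _).1 h)).2
  · intro h; exact absurd (by simpa using hw) h
  · intro x hx hxv
    apply sum_eq_zero
    intro y hy
    by_contra h
    exact hxv (huniq x hx y (by simpa using hy) ((h1 _).1 h)).1
  · intro h; exact absurd hv h

end FlowAux

namespace FlowAux
open Finset Classical

set_option linter.unusedSectionVars false
variable {V : Type} [Fintype V]
variable {K : Type} [Field K] [Fintype K] [CharP K 2]

lemma sum_restrict {A A1 A2 : Finset (Sym2 V)} {S T : Finset V} {φ : Sym2 V → K} (c : K)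
    (h : ∀ e, φ e ≠ 0 ↔ e ∈ A) (hA : A = A1 ∪ A2)
    (h2 : ∀ x ∈ S, ∀ y, s(x, y) ∉ A2) (hc : ∀ v ∈ S, ∑ y, φ s(v, y) = 0) :
    ∀ v ∈ S, ∑ y, (if s(v, y) ∈ A1 then c * φ s(v, y) else 0) = 0 := by
  intro v hv
  have : ∀ y, (if s(v, y) ∈ A1 then c * φ s(v, y) else 0) = c * φ s(v, y) := by
    intro y
    split_ifs with h'
    · rfl
    · have : φ s(v, y) = 0 := by
        by_contra h''
        have := (h _).1 h''
        rw [hA, mem_union] at this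
        rcases this with h | h
        · exact h' h
        · exact h2 v hv y h
      rw [this, mul_zero]
  simp only [this]
  rw [← mul_sum, hc v hv, mul_zero]

lemma NN_prod {A A1 A2 : Finset (Sym2 V)} {S T : Finset V} (hA : A = A1 ∪ A2)
    (hd : Disjoint A1 A2)
    (h1 : ∀ x ∈ T, ∀ y, s(x, y) ∉ A1) (h2 : ∀ x ∈ S, ∀ y, s(x, y) ∉ A2) :
    NN K A (S ∪ T) = NN K A1 S * NN K A2 T := by
  unfold NN
  rw [← card_product]
  refine Finset.card_bij' (fun φ _ => (fun e => if e ∈ A1 then φ e else 0,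
      fun e => if e ∈ A2 then φ e else 0))
      (fun p _ => fun e => if e ∈ A1 then p.1 e else p.2 e) ?_ ?_ ?_ ?_
  · intro φ hφ
    rw [mem_fl] at hφ
    rw [mem_product, mem_fl, mem_fl]
    refine ⟨⟨?_, ?_⟩, ?_, ?_⟩
    · intro e
      by_cases h : e ∈ A1
      · simp only [h, if_true, hφ.1, hA]; simp [h]
      · simp [h]
    · have := sum_restrict (S := S) (A1 := A1) (T := T) 1 hφ.1 hA h2 (fun v hv => hφ.2 v (mem_union_left _ hv))
      simpa using this
    · intro e
      by_cases h : e ∈ A2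
      · simp only [h, if_true, hφ.1, hA]; simp [h]
      · simp [h]
    · have := sum_restrict (S := T) (A1 := A2) (T := T) 1 hφ.1 (hA.trans (union_comm _ _)) h1 (fun v hv => hφ.2 v (mem_union_right _ hv))
      simpa using this
  · rintro ⟨φ1, φ2⟩ hφ
    rw [mem_product, mem_fl, mem_fl] at hφ
    obtain ⟨⟨a1, a2⟩, b1, b2⟩ := hφ
    simp only at a1 a2 b1 b2
    rw [mem_fl]
    refine ⟨?_, ?_⟩
    · intro e
      by_cases h : e ∈ A1
      · simp only [h, if_true, a1, hA]; simp [h]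
      · simp only [h, if_false, b1, hA]; simp [h]
    · intro v hv
      rw [mem_union] at hv
      rcases hv with hv | hv
      · rw [← a2 v hv]
        apply sum_congr rfl
        intro y _
        simp only
        split_ifs with h
        · rfl
        · have e1 : φ1 s(v, y) = 0 := by by_contra h'; exact h ((a1 _).1 h')
          have e2 : φ2 s(v, y) = 0 := by by_contra h'; exact h2 v hv y ((b1 _).1 h')
          rw [e1, e2]
      · rw [← b2 v hv]
        apply sum_congr rfl
        intro y _
        simp [h1 v hv y]
  · intro φ hφ
    rw [mem_fl] at hφ
    funext e
    simp only
    split_ifs with h1 h2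
    · rfl
    · rfl
    · by_contra h
      have := (hφ.1 e).1 (Ne.symm h)
      rw [hA, mem_union] at this
      tauto
  · rintro ⟨φ1, φ2⟩ hφ
    rw [mem_product, mem_fl, mem_fl] at hφ
    obtain ⟨⟨a1, a2⟩, b1, b2⟩ := hφ
    simp only at a1 a2 b1 b2
    rw [Prod.mk.injEq]
    constructor
    · funext e
      simp only
      split_ifs with h
      · rfl
      · by_contra h'; exact h ((a1 _).1 (Ne.symm h'))
    · funext e
      simp only
      split_ifs with h h'
      · exact absurd ‹e ∈ A2› (disjoint_left.1 hd ‹e ∈ A1›)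
      · rfl
      · by_contra h'; exact h ((b1 _).1 (Ne.symm h'))

lemma NN_series {A A1 A2 : Finset (Sym2 V)} {S T : Finset V} {v x y : V} (hA : A = A1 ∪ A2)
    (hd : Disjoint A1 A2)
    (h1 : ∀ x ∈ T, ∀ y, s(x, y) ∉ A1) (h2 : ∀ x ∈ S, ∀ y, s(x, y) ∉ A2)
    (hvS : v ∉ S) (hvT : v ∉ T) (hxy : x ≠ y)
    (hnb : nb A v = {x, y}) (hx : s(v, x) ∈ A1) (hy : s(v, y) ∈ A2) :
    (Fintype.card K - 1) * NN K A (insert v (S ∪ T)) = NN K A1 S * NN K A2 T := by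
  unfold NN
  have hc : Fintype.card K - 1 = ((univ : Finset K).erase 0).card := by
    rw [card_erase_of_mem (mem_univ _), card_univ]
  rw [hc, ← card_product, ← card_product]
  have hx2 : s(v, x) ∉ A2 := disjoint_left.1 hd hx
  have hy1 : s(v, y) ∉ A1 := disjoint_right.1 hd hy
  refine Finset.card_bij' (fun p _ => (fun e => if e ∈ A1 then p.1 * p.2 e else 0,
      fun e => if e ∈ A2 then p.2 e else 0))
      (fun p _ => (p.1 s(v, x) / p.2 s(v, y),
        fun e => if e ∈ A1 then (p.1 s(v, x) / p.2 s(v, y))⁻¹ * p.1 e else p.2 e)) ?_ ?_ ?_ ?_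
  · rintro ⟨c, φ⟩ hφ
    rw [mem_product, mem_fl] at hφ
    obtain ⟨hc, hφ⟩ := hφ
    simp only [mem_erase, mem_univ, and_true] at hc hφ
    rw [mem_product, mem_fl, mem_fl]
    refine ⟨⟨?_, ?_⟩, ?_, ?_⟩
    · intro e
      by_cases h : e ∈ A1
      · have := (hφ.1 e).2 (by simp [hA, h])
        simp [h, hc, this]
      · simp [h]
    · exact sum_restrict (S := S) (A1 := A1) (T := T) c hφ.1 hA h2 (fun v hv => hφ.2 v (by simp [hv]))
    · intro e
      by_cases h : e ∈ A2
      · simp only [h, if_true, hφ.1, hA]; simp [h]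
      · simp [h]
    · have := sum_restrict (S := T) (A1 := A2) (T := T) 1 hφ.1 (hA.trans (union_comm _ _)) h1 (fun v hv => hφ.2 v (by simp [hv]))
      simpa using this
  · rintro ⟨φ1, φ2⟩ hφ
    rw [mem_product, mem_fl, mem_fl] at hφ
    obtain ⟨⟨a1, a2⟩, b1, b2⟩ := hφ
    simp only at a1 a2 b1 b2
    have n1 := (a1 _).2 hx
    have n2 := (b1 _).2 hy
    rw [mem_product, mem_fl]
    have key : ∀ e, (if e ∈ A1 then (φ1 s(v, x) / φ2 s(v, y))⁻¹ * φ1 e else φ2 e) ≠ 0 ↔ e ∈ A := by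
      intro e
      by_cases h : e ∈ A1
      · have := (a1 e).2 h
        simp [h, n1, n2, hA, this]
      · simp only [h, if_false, b1, hA]; simp [h]
    refine ⟨by simp [n1, n2], key, ?_⟩
    intro u hu
    rw [mem_insert, mem_union] at hu
    rcases hu with hu | hv | hv
    · subst hu
      rw [sum_nb key, hnb, sum_pair hxy]
      simp only [hx, hy1, if_true, if_false]
      rw [show (φ1 s(u, x) / φ2 s(u, y))⁻¹ * φ1 s(u, x) = φ2 s(u, y) by field_simp]
      exact CharTwo.add_self_eq_zero _
    · have := a2 u hv
      rw [← mul_zero (φ1 s(v, x) / φ2 s(v, y))⁻¹, ← this, mul_sum]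
      apply sum_congr rfl
      intro y' _
      simp only
      split_ifs with h
      · rfl
      · have e1 : φ1 s(u, y') = 0 := by by_contra h'; exact h ((a1 _).1 h')
        have e2 : φ2 s(u, y') = 0 := by by_contra h'; exact h2 u hv y' ((b1 _).1 h')
        rw [e1, e2, mul_zero]
    · rw [← b2 u hv]
      apply sum_congr rfl
      intro y _
      simp [h1 u hv y]
  · rintro ⟨c, φ⟩ hφ
    rw [mem_product, mem_fl] at hφ
    obtain ⟨hc, hφ⟩ := hφ
    simp only [mem_erase, mem_univ, and_true] at hc hφ
    have hs := hφ.2 v (by simp)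
    rw [sum_nb hφ.1, hnb, sum_pair hxy] at hs
    have hs' : φ s(v, x) = φ s(v, y) := CharTwo.add_eq_zero.1 hs
    have hy0 := (hφ.1 s(v, y)).2 (by simp [hA, hy])
    have hcc : c * φ s(v, x) / φ s(v, y) = c := by rw [hs']; field_simp
    simp only [hx, hy, if_true, hcc, Prod.mk.injEq, true_and]
    funext e
    split_ifs with h1 h2
    · field_simp
    · rfl
    · by_contra h
      have := (hφ.1 e).1 (Ne.symm h)
      rw [hA, mem_union] at this
      tauto
  · rintro ⟨φ1, φ2⟩ hφ
    rw [mem_product, mem_fl, mem_fl] at hφ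
    obtain ⟨⟨a1, a2⟩, b1, b2⟩ := hφ
    simp only at a1 a2 b1 b2
    have n1 := (a1 _).2 hx
    have n2 := (b1 _).2 hy
    rw [Prod.mk.injEq]
    constructor
    · funext e
      simp only
      split_ifs with h
      · field_simp
      · by_contra h'; exact h ((a1 _).1 (Ne.symm h'))
    · funext e
      simp only
      split_ifs with h h'
      · exact absurd ‹e ∈ A2› (disjoint_left.1 hd ‹e ∈ A1›)
      · rfl
      · by_contra h'; exact h ((b1 _).1 (Ne.symm h'))

end FlowAux

namespace FlowAux
open Finset Classical

set_option linter.unusedSectionVars false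
variable {V : Type} [Fintype V]

lemma tt_comm (A : Finset (Sym2 V)) (S T : Finset V) : tt A S T = tt A T S := by
  unfold tt
  rw [sum_comm]
  simp only [Sym2.eq_swap]

lemma tt_union_right (A : Finset (Sym2 V)) (S : Finset V) {T T' : Finset V} (h : Disjoint T T') :
    tt A S (T ∪ T') = tt A S T + tt A S T' := by
  unfold tt
  rw [← sum_add_distrib]
  apply sum_congr rfl
  intro x _
  rw [sum_union h]

lemma tt_union_left (A : Finset (Sym2 V)) (S : Finset V) {T T' : Finset V} (h : Disjoint T T') :
    tt A (T ∪ T') S = tt A T S + tt A T' S := by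
  rw [tt_comm, tt_union_right _ _ h, tt_comm, tt_comm A S T']

lemma tt_mono (A : Finset (Sym2 V)) {S S' T T' : Finset V} (h : S ⊆ S') (h' : T ⊆ T') :
    tt A S T ≤ tt A S' T' := by
  unfold tt
  calc _ ≤ ∑ x ∈ S, ∑ y ∈ T', (if s(x, y) ∈ A then 1 else 0) :=
        sum_le_sum fun x _ => sum_le_sum_of_subset h'
    _ ≤ _ := sum_le_sum_of_subset h

lemma tt_single (A : Finset (Sym2 V)) (x y : V) :
    tt A {x} {y} = if s(x, y) ∈ A then 1 else 0 := by
  simp only [tt, sum_singleton]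

lemma tt_pos {A : Finset (Sym2 V)} {S T : Finset V} {x y : V} (hx : x ∈ S) (hy : y ∈ T)
    (h : s(x, y) ∈ A) : 1 ≤ tt A S T := by
  have := tt_mono A (singleton_subset_iff.2 hx) (singleton_subset_iff.2 hy)
  rw [tt_single, if_pos h] at this
  exact this

lemma tt_erase_of_not {A : Finset (Sym2 V)} {S T : Finset V} {v w : V}
    (h1 : ¬ (v ∈ S ∧ w ∈ T)) (h2 : ¬ (w ∈ S ∧ v ∈ T)) :
    tt (A.erase s(v, w)) S T = tt A S T := by
  unfold tt
  apply sum_congr rfl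
  intro x hx
  apply sum_congr rfl
  intro y hy
  have : s(x, y) ≠ s(v, w) := by
    intro h
    rw [Sym2.eq_iff] at h
    rcases h with ⟨rfl, rfl⟩ | ⟨rfl, rfl⟩
    · exact h1 ⟨hx, hy⟩
    · exact h2 ⟨hx, hy⟩
  simp [this]

lemma tt_erase {A : Finset (Sym2 V)} {S T : Finset V} {v w : V} (hd : Disjoint S T)
    (hv : v ∈ S) (hw : w ∈ T) (h : s(v, w) ∈ A) :
    tt (A.erase s(v, w)) S T + 1 = tt A S T := by
  have e1 : S = {v} ∪ S.erase v := by ext a; simp; grind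
  have e2 : T = {w} ∪ T.erase w := by ext a; simp; grind
  have hwS : w ∉ S := disjoint_right.1 hd hw
  have hvT : v ∉ T := disjoint_left.1 hd hv
  have d1 : Disjoint {v} (S.erase v) := by simp
  have d2 : Disjoint {w} (T.erase w) := by simp
  have key : ∀ B : Finset (Sym2 V), tt B S T = tt B {v} {w} + tt B {v} (T.erase w) +
      tt B (S.erase v) T := by
    intro B
    conv_lhs => rw [e1]
    rw [tt_union_left _ _ d1]
    conv_lhs => enter [1]; rw [e2]
    rw [tt_union_right _ _ d2]
  rw [key, key A, tt_erase_of_not (S := {v}) (T := T.erase w), tt_erase_of_not (S := S.erase v)]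
  · rw [tt_single, tt_single, if_pos h, if_neg (by simp)]; omega
  · simp
  · grind
  · simp
  · intro h'; exact hvT (mem_of_mem_erase h'.2)

def Conn (A : Finset (Sym2 V)) (U : Finset V) : Prop :=
  ∀ S ⊆ U, S.Nonempty → S ≠ U → ∃ x ∈ S, ∃ y ∈ U \ S, s(x, y) ∈ A

lemma conn_part {A : Finset (Sym2 V)} {U S0 : Finset V} {x : V} (h : Conn A U) (hS : S0 ⊆ U)
    (hx : ∀ a ∈ S0, ∀ b ∈ U \ S0, s(a, b) ∈ A → a = x) : Conn A S0 := by
  intro S hSS hne hneq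
  by_cases hxS : x ∈ S
  · obtain ⟨a, ha, b, hb, hab⟩ := h (S0 \ S) (by grind)
      (by rw [sdiff_nonempty]; intro h; exact hneq (subset_antisymm hSS h))
      (by obtain ⟨z, hz⟩ := hne; intro h; have := hS (hSS hz); rw [← h] at this; grind)
    by_cases hb' : b ∈ S
    · exact ⟨b, hb', a, ha, by rwa [Sym2.eq_swap]⟩
    · have := hx a (by grind) b (by grind) hab
      grind
  · obtain ⟨a, ha, b, hb, hab⟩ := h S (by grind) hne
      (by rintro rfl; exact hneq (subset_antisymm hSS hS))
    by_cases hb' : b ∈ S0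
    · exact ⟨a, ha, b, by grind, hab⟩
    · have := hx a (by grind) b (by grind) hab
      grind

lemma conn_congr {A B : Finset (Sym2 V)} {U : Finset V} (h : Conn A U)
    (hAB : ∀ x ∈ U, ∀ y ∈ U, s(x, y) ∈ A → s(x, y) ∈ B) : Conn B U := by
  intro S hS hne hneq
  obtain ⟨a, ha, b, hb, hab⟩ := h S hS hne hneq
  exact ⟨a, ha, b, hb, hAB _ (hS ha) _ (by grind) hab⟩

structure Ok (A : Finset (Sym2 V)) (U : Finset V) : Prop where
  nodiag : ∀ v, s(v, v) ∉ A
  touch : ∀ x y, s(x, y) ∈ A → x ∈ U ∨ y ∈ U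
  deg : ∀ v ∈ U, (nb A v).card ≤ 3
  conn : Conn A U
  dang : ∃ v ∈ U, ∃ w, w ∉ U ∧ s(v, w) ∈ A

def Light (A : Finset (Sym2 V)) (U : Finset V) : Prop := ∀ v ∈ U, (nb A v).card = 2
def Heavy (A : Finset (Sym2 V)) (U : Finset V) : Prop := ∃ v ∈ U, (nb A v).card = 3

structure QQ (A : Finset (Sym2 V)) (U : Finset V) : Prop where
  deg : ∀ v ∈ U, (nb A v).card = 2 ∨ (nb A v).card = 3
  heavy : Heavy A U
  two : 2 ≤ tt A U Uᶜ
  cut : ∀ S ⊆ U, Heavy A S → Heavy A (U \ S) → 2 ≤ tt A S (U \ S) ∧ 3 ≤ tt A S Sᶜ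

lemma cut_contra (A : Finset (Sym2 V)) (P R T1 T2 v W : Finset V)
    (d1 : Disjoint P R) (d2 : Disjoint P T1) (d3 : Disjoint P T2) (d4 : Disjoint P v)
    (d5 : Disjoint P W) (d6 : Disjoint R T1) (d7 : Disjoint R T2) (d8 : Disjoint R v)
    (d9 : Disjoint R W) (d10 : Disjoint T1 T2) (d11 : Disjoint T1 v) (d12 : Disjoint T1 W)
    (d13 : Disjoint T2 v) (d14 : Disjoint T2 W) (d15 : Disjoint v W)
    (h1 : tt A (P ∪ T1) (R ∪ T2) ≤ 1)
    (h2 : tt A v (P ∪ R ∪ T1 ∪ T2) ≤ 2)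
    (h3 : 2 ≤ tt A (P ∪ T1) (v ∪ R ∪ T2))
    (h4 : 2 ≤ tt A (R ∪ T2) (v ∪ P ∪ T1))
    (h5 : tt A (v ∪ P ∪ R) W ≤ 1) (h6 : 1 ≤ tt A v W)
    (h7 : tt A (v ∪ P ∪ R) (T1 ∪ T2) ≤ 2)
    (hP : Heavy A P → 3 ≤ tt A P (v ∪ R ∪ T1 ∪ T2 ∪ W))
    (hR : Heavy A R → 3 ≤ tt A R (v ∪ P ∪ T1 ∪ T2 ∪ W))
    (hT1 : Heavy A T1 → 2 ≤ tt A T1 (v ∪ P ∪ R ∪ T2))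
    (hT2 : Heavy A T2 → 2 ≤ tt A T2 (v ∪ P ∪ R ∪ T1))
    (k1 : Heavy A P ∨ Heavy A R) (k2 : Heavy A T1 ∨ Heavy A T2)
    (k3 : Heavy A P ∨ Heavy A T1) (k4 : Heavy A R ∨ Heavy A T2) : False := by
  have e1 := tt_comm A v P
  have e2 := tt_comm A v R
  have e3 := tt_comm A v T1
  have e4 := tt_comm A v T2
  have e5 := tt_comm A P R
  have e6 := tt_comm A P T1
  have e7 := tt_comm A P T2
  have e8 := tt_comm A R T1
  have e9 := tt_comm A R T2
  have e10 := tt_comm A T1 T2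
  have := d1.symm
  have := d2.symm
  have := d3.symm
  have := d4.symm
  have := d5.symm
  have := d6.symm
  have := d7.symm
  have := d8.symm
  have := d9.symm
  have := d10.symm
  have := d11.symm
  have := d13.symm
  simp only [tt_union_right, tt_union_left, disjoint_union_left, disjoint_union_right, and_self,
    and_true, true_and, *] at h1 h2 h3 h4 h5 h7 hP hR hT1 hT2
  by_cases a1 : Heavy A P <;> by_cases a2 : Heavy A R <;> by_cases a3 : Heavy A T1 <;>
    by_cases a4 : Heavy A T2 <;> simp only [a1, a2, a3, a4, true_imp_iff, false_imp_iff, or_self, or_false, false_or, true_or, or_true] at k1 k2 k3 k4 hP hR hT1 hT2 <;> omega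

end FlowAux

namespace FlowAux
open Finset Classical

set_option linter.unusedSectionVars false
set_option linter.unusedSimpArgs false
variable {V : Type} [Fintype V]

lemma nb_erase_ne {A : Finset (Sym2 V)} {u v w : V} (h1 : u ≠ v) (h2 : u ≠ w) :
    nb (A.erase s(v, w)) u = nb A u := by
  ext y
  simp only [mem_nb, mem_erase, ne_eq, Sym2.eq_iff]
  tauto

lemma nb_erase_self {A : Finset (Sym2 V)} {v w : V} :
    nb (A.erase s(v, w)) v = (nb A v).erase w := by
  ext y
  simp only [mem_nb, mem_erase, ne_eq, Sym2.eq_iff]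
  grind

lemma Heavy.mono {A : Finset (Sym2 V)} {S T : Finset V} (h : Heavy A S) (hST : S ⊆ T) :
    Heavy A T := by
  obtain ⟨v, hv, h⟩ := h
  exact ⟨v, hST hv, h⟩

lemma Heavy.union {A : Finset (Sym2 V)} {S T R : Finset V} (h : Heavy A S) (hST : S ⊆ T ∪ R) :
    Heavy A T ∨ Heavy A R := by
  obtain ⟨v, hv, h⟩ := h
  rcases mem_union.1 (hST hv) with h' | h'
  · exact Or.inl ⟨v, h', h⟩
  · exact Or.inr ⟨v, h', h⟩

lemma tt_v_le {A : Finset (Sym2 V)} {U : Finset V} {v w : V} (hw : w ∉ U)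
    (he : s(v, w) ∈ A) (h3 : (nb A v).card = 3) : tt A {v} U ≤ 2 := by
  have : tt A {v} U = (U.filter (fun y => s(v, y) ∈ A)).card := by
    simp only [tt, sum_singleton, card_filter]
  rw [this]
  have h2 : ((nb A v).erase w).card = 2 := by
    rw [card_erase_of_mem (mem_nb.2 he), h3]
  rw [← h2]
  apply card_le_card
  intro y hy
  rw [mem_filter] at hy
  rw [mem_erase, mem_nb]
  exact ⟨ne_of_mem_of_not_mem hy.1 hw, hy.2⟩

lemma QQ_bad {A : Finset (Sym2 V)} {U : Finset V} {v w : V} (hv : v ∈ U) (hw : w ∉ U)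
    (he : s(v, w) ∈ A) (h3 : (nb A v).card = 3) (hQ : QQ A U)
    {S0 : Finset V} (hS0 : S0 ⊆ U.erase v) (hh1 : Heavy A S0) (hh2 : Heavy A (U.erase v \ S0))
    (hle : tt A S0 (U.erase v \ S0) ≤ 1) : QQ (A.erase s(v, w)) U := by
  have hvw : v ≠ w := ne_of_mem_of_not_mem hv hw
  have hdeg2 : (nb (A.erase s(v, w)) v).card = 2 := by
    rw [nb_erase_self, card_erase_of_mem (mem_nb.2 he), h3]
  have hne : ∀ u ∈ U, u ≠ v → nb (A.erase s(v, w)) u = nb A u := by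
    intro u hu huv
    exact nb_erase_ne huv (ne_of_mem_of_not_mem hu hw)
  have hheavy : ∀ S ⊆ U, Heavy (A.erase s(v, w)) S → Heavy A (S.erase v) := by
    rintro S hS ⟨u, hu, h⟩
    have huv : u ≠ v := by rintro rfl; omega
    exact ⟨u, mem_erase.2 ⟨huv, hu⟩, by rwa [hne u (hS hu) huv] at h⟩
  have hHv : ∀ S : Finset V, v ∈ S → Heavy A S := fun S hS => ⟨v, hS, h3⟩
  have hvS0 : v ∉ S0 := fun h => by simpa using hS0 h
  have hS0U : S0 ⊆ U := hS0.trans (erase_subset _ _)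
  set T0 := U.erase v \ S0 with hT0
  have hvT0 : v ∉ T0 := by simp [hT0]
  have hT0U : T0 ⊆ U := sdiff_subset.trans (erase_subset _ _)
  have hv2 : tt A {v} U ≤ 2 := tt_v_le hw he h3
  have c1 := hQ.cut S0 hS0U hh1 (hHv _ (by simp [hv, hvS0]))
  have c2 := hQ.cut T0 hT0U hh2 (hHv _ (by simp [hv, hvT0]))
  have c1' := c1.1
  have c2' := c2.1
  have c1'' := c1.2
  have c2'' := c2.2
  have dST : Disjoint S0 T0 := disjoint_sdiff
  have dvS : Disjoint {v} S0 := by simpa using hvS0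
  have dvT : Disjoint {v} T0 := by simpa using hvT0
  have eU : U = {v} ∪ S0 ∪ T0 := by ext a; simp only [hT0, mem_union, mem_sdiff, mem_erase, mem_singleton]; grind
  have eUS : U \ S0 = {v} ∪ T0 := by ext a; simp only [hT0, mem_union, mem_sdiff, mem_erase, mem_singleton]; grind
  have eUT : U \ T0 = {v} ∪ S0 := by ext a; simp only [hT0, mem_union, mem_sdiff, mem_erase, mem_singleton]; grind
  have eSc : S0ᶜ = {v} ∪ T0 ∪ Uᶜ := by ext a; simp only [hT0, mem_union, mem_sdiff, mem_erase, mem_singleton, mem_compl]; grind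
  have eTc : T0ᶜ = {v} ∪ S0 ∪ Uᶜ := by ext a; simp only [hT0, mem_union, mem_sdiff, mem_erase, mem_singleton, mem_compl]; grind
  have dvU : Disjoint {v} Uᶜ := by simpa using hv
  have dSU : Disjoint S0 Uᶜ := disjoint_left.2 fun a ha => by simpa using hS0U ha
  have dTU : Disjoint T0 Uᶜ := disjoint_left.2 fun a ha => by simpa using hT0U ha
  rw [eUS, tt_union_right _ _ dvT] at c1'
  rw [eUT, tt_union_right _ _ dvS] at c2'
  rw [eSc, tt_union_right _ _ (disjoint_union_left.2 ⟨dvU, dTU⟩), tt_union_right _ _ dvT] at c1''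
  rw [eTc, tt_union_right _ _ (disjoint_union_left.2 ⟨dvU, dSU⟩), tt_union_right _ _ dvS] at c2''
  have hv2' := hv2
  rw [eU, tt_union_right _ _ (disjoint_union_left.2 ⟨dvT, dST⟩), tt_union_right _ _ dvS] at hv2'
  have s1 := tt_comm A S0 {v}
  have s2 := tt_comm A T0 {v}
  have s3 := tt_comm A T0 S0
  have hvvv : 1 ≤ tt A {v} Uᶜ := tt_pos (mem_singleton_self v) (by simpa using hw) he
  have aS : 1 ≤ tt A S0 Uᶜ := by omega
  have aT : 1 ≤ tt A T0 Uᶜ := by omega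
  refine ⟨?_, ?_, ?_, ?_⟩
  · intro u hu
    by_cases h : u = v
    · subst h; left; exact hdeg2
    · rw [hne u hu h]; exact hQ.deg u hu
  · obtain ⟨u, hu, h⟩ := hh1
    exact ⟨u, hS0U hu, by rwa [hne u (hS0U hu) (ne_of_mem_of_not_mem hu hvS0)]⟩
  · have h := tt_erase (S := U) (T := Uᶜ) disjoint_compl_right hv (by simpa using hw) he
    have h' : tt A U Uᶜ = tt A {v} Uᶜ + tt A S0 Uᶜ + tt A T0 Uᶜ := by
      conv_lhs => enter [2]; rw [eU]
      rw [tt_union_left _ _ (disjoint_union_left.2 ⟨dvT, dST⟩), tt_union_left _ _ dvS]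
    omega
  · intro S hS hSh hSh'
    have k1 := hheavy S hS hSh
    have k2 := hheavy (U \ S) sdiff_subset hSh'
    have hc := hQ.cut S hS (k1.mono (erase_subset _ _)) (k2.mono (erase_subset _ _))
    have hwS : w ∉ S := fun h => hw (hS h)
    refine ⟨?_, ?_⟩
    · rw [tt_erase_of_not (by simp [hw]) (by simp [hwS])]
      exact hc.1
    · by_cases hvS : v ∈ S
      · have h := tt_erase (S := S) (T := Sᶜ) disjoint_compl_right hvS (by simpa using hwS) he
        by_contra hcon
        have eS : Sᶜ = (U \ S) ∪ Uᶜ := by ext a; simp only [mem_union, mem_sdiff, mem_compl]; grind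
        have dS : Disjoint (U \ S) Uᶜ := disjoint_left.2 fun a ha => by
          simpa using (mem_sdiff.1 ha).1
        have h5 : 1 ≤ tt A S Uᶜ := tt_pos hvS (by simpa using hw) he
        have hspl : tt A S Sᶜ = tt A S (U \ S) + tt A S Uᶜ := by
          rw [eS, tt_union_right _ _ dS]
        have hc1 := hc.1
        have q1 : tt A S (U \ S) ≤ 2 := by omega
        have q2 : tt A S Uᶜ ≤ 1 := by omega
        have cutP : ∀ P ⊆ U, v ∉ P → Heavy A P → 2 ≤ tt A P (U \ P) ∧ 3 ≤ tt A P Pᶜ :=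
          fun P hP hvP hPh => hQ.cut P hP hPh (hHv _ (by simp [hv, hvP]))
        refine cut_contra A (S ∩ S0) (S ∩ T0) (S0 \ S) (T0 \ S) {v} Uᶜ ?_ ?_ ?_ ?_ ?_ ?_ ?_ ?_ ?_
          ?_ ?_ ?_ ?_ ?_ ?_ ?_ ?_ ?_ ?_ ?_ hvvv ?_ ?_ ?_ ?_ ?_ ?_ ?_ ?_ ?_
        any_goals
          rw [disjoint_left]
          intro a
          simp only [hT0, mem_inter, mem_sdiff, mem_erase, mem_compl, mem_singleton]
          have := @hS0U a
          have := @hS a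
          grind
        · convert hle using 2 <;> (ext a; simp only [hT0, mem_union, mem_inter, mem_sdiff]; grind)
        · refine le_trans (tt_mono A subset_rfl ?_) hv2
          intro a
          have := @hS0U a
          have := @hT0U a
          simp only [mem_union, mem_inter, mem_sdiff]; grind
        · have := c1.1
          convert this using 2
          · ext a; simp only [mem_union, mem_inter, mem_sdiff]; grind
          · rw [eUS]; ext a; simp only [mem_union, mem_inter, mem_sdiff]; grind
        · have := c2.1
          convert this using 2
          · ext a; simp only [mem_union, mem_inter, mem_sdiff]; grind
          · rw [eUT]; ext a; simp only [mem_union, mem_inter, mem_sdiff]; grind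
        · convert q2 using 2
          ext a
          have := @hS a
          rw [eU] at this
          simp only [mem_union, mem_inter, mem_singleton] at this ⊢; grind
        · convert q1 using 2
          · ext a
            have := @hS a
            rw [eU] at this
            simp only [mem_union, mem_inter, mem_singleton] at this ⊢; grind
          · ext a
            have := @hS a
            rw [eU] at this ⊢
            simp only [mem_union, mem_inter, mem_sdiff, mem_singleton] at this ⊢; grind
        · intro hp
          have := (cutP _ (inter_subset_left.trans hS) (by simp [hvS0]) hp).2
          convert this using 2
          ext a
          have := @hS a
          have := @hS0U a
          have hz : a ∈ U ↔ a ∈ {v} ∪ S0 ∪ T0 := by rw [← eU]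
          simp only [mem_union, mem_inter, mem_sdiff, mem_singleton, mem_compl] at this hz ⊢
          rw [hz]
          have hdd : a ∈ S0 → a ∉ T0 := fun h => disjoint_left.1 dST h
          grind
        · intro hp
          have := (cutP _ (inter_subset_left.trans hS) (by simp [hvT0]) hp).2
          convert this using 2
          ext a
          have := @hS a
          have := @hS0U a
          have hz : a ∈ U ↔ a ∈ {v} ∪ S0 ∪ T0 := by rw [← eU]
          simp only [mem_union, mem_inter, mem_sdiff, mem_singleton, mem_compl] at this hz ⊢
          rw [hz]
          have hdd : a ∈ S0 → a ∉ T0 := fun h => disjoint_left.1 dST h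
          grind
        · intro hp
          have := (cutP _ (sdiff_subset.trans hS0U) (by simp [hvS0]) hp).1
          convert this using 2
          ext a
          have := @hS a
          have := @hS0U a
          have hz : a ∈ U ↔ a ∈ {v} ∪ S0 ∪ T0 := by rw [← eU]
          simp only [mem_union, mem_inter, mem_sdiff, mem_singleton, mem_compl] at this hz ⊢
          rw [hz]
          have hdd : a ∈ S0 → a ∉ T0 := fun h => disjoint_left.1 dST h
          grind
        · intro hp
          have := (cutP _ (sdiff_subset.trans hT0U) (by simp [hvT0]) hp).1
          convert this using 2
          ext a
          have := @hS a
          have := @hS0U a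
          have hz : a ∈ U ↔ a ∈ {v} ∪ S0 ∪ T0 := by rw [← eU]
          simp only [mem_union, mem_inter, mem_sdiff, mem_singleton, mem_compl] at this hz ⊢
          rw [hz]
          have hdd : a ∈ S0 → a ∉ T0 := fun h => disjoint_left.1 dST h
          grind
        · refine k1.union ?_
          intro a ha
          have hz : a ∈ U ↔ a ∈ {v} ∪ S0 ∪ T0 := by rw [← eU]
          have := @hS a
          simp only [mem_union, mem_inter, mem_sdiff, mem_singleton, mem_erase] at hz ha ⊢
          grind
        · refine k2.union ?_
          intro a ha
          have hz : a ∈ U ↔ a ∈ {v} ∪ S0 ∪ T0 := by rw [← eU]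
          simp only [mem_union, mem_inter, mem_sdiff, mem_singleton, mem_erase] at hz ha ⊢
          grind
        · refine hh1.union ?_
          intro a ha
          simp only [mem_union, mem_inter, mem_sdiff]
          grind
        · refine hh2.union ?_
          intro a ha
          simp only [mem_union, mem_inter, mem_sdiff]
          grind
      · rw [tt_erase_of_not (by simp [hvS]) (by simp [hwS])]
        exact hc.2

lemma QQ_good {A : Finset (Sym2 V)} {U : Finset V} {v w x y : V} (hv : v ∈ U) (hw : w ∉ U)
    (h3 : (nb A v).card = 3) (hQ : QQ A U)
    (hx : x ∈ U) (hxv : x ≠ v) (hy : y ∈ U) (hyv : y ≠ v) (hxy : x ≠ y)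
    (hvx : s(v, x) ∈ A) (hvy : s(v, y) ∈ A)
    (hh : Heavy A (U.erase v))
    (hgood : ∀ S ⊆ U.erase v, Heavy A S → Heavy A (U.erase v \ S) → 2 ≤ tt A S (U.erase v \ S)) :
    QQ (A.erase s(v, w)) (U.erase v) := by
  have hne : ∀ u ∈ U.erase v, nb (A.erase s(v, w)) u = nb A u := by
    intro u hu
    rw [mem_erase] at hu
    exact nb_erase_ne hu.1 (ne_of_mem_of_not_mem hu.2 hw)
  have hheavy : ∀ S ⊆ U.erase v, (Heavy (A.erase s(v, w)) S ↔ Heavy A S) := by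
    intro S hS
    constructor
    · rintro ⟨u, hu, h⟩
      exact ⟨u, hu, by rwa [hne u (hS hu)] at h⟩
    · rintro ⟨u, hu, h⟩
      exact ⟨u, hu, by rwa [hne u (hS hu)]⟩
  refine ⟨?_, (hheavy _ subset_rfl).2 hh, ?_, ?_⟩
  · intro u hu
    rw [hne u hu]; exact hQ.deg u (mem_of_mem_erase hu)
  · have : tt (A.erase s(v, w)) ({x} ∪ {y}) {v} ≤ tt (A.erase s(v, w)) (U.erase v) (U.erase v)ᶜ := by
      apply tt_mono
      · intro a ha
        simp only [mem_union, mem_singleton] at ha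
        rcases ha with rfl | rfl
        · simp [hx, hxv]
        · simp [hy, hyv]
      · simp
    rw [tt_union_left _ _ (by simpa using hxy), tt_single, tt_single, if_pos, if_pos] at this
    · exact this
    · rw [(Sym2.eq_swap : s(y, v) = s(v, y)), mem_erase]
      refine ⟨?_, hvy⟩
      rw [ne_eq, Sym2.eq_iff]
      rintro (h | h)
      · exact hw (h.2 ▸ hy)
      · exact hyv h.2
    · rw [(Sym2.eq_swap : s(x, v) = s(v, x)), mem_erase]
      refine ⟨?_, hvx⟩
      rw [ne_eq, Sym2.eq_iff]
      rintro (h | h)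
      · exact hw (h.2 ▸ hx)
      · exact hxv h.2
  · intro S hS h1 h2
    rw [hheavy S hS] at h1
    rw [hheavy _ sdiff_subset] at h2
    have hvS : v ∉ S := fun h => by simpa using hS h
    have hwS : w ∉ S := fun h => hw (mem_of_mem_erase (hS h))
    rw [tt_erase_of_not (by simp [hvS]) (by simp [hwS]), tt_erase_of_not (by simp [hvS]) (by simp [hwS])]
    refine ⟨hgood S hS h1 h2, (hQ.cut S (hS.trans (erase_subset _ _)) h1 ?_).2⟩
    exact ⟨v, by simp [hv, hvS], h3⟩

end FlowAux

namespace FlowAux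
open Finset Classical

set_option linter.unusedSectionVars false
set_option linter.unusedSimpArgs false
variable {V : Type} [Fintype V]

def Good (A : Finset (Sym2 V)) (U : Finset V) (g : ℕ[X]) : Prop :=
  ∀ (K : Type) [Field K] [Fintype K] [CharP K 2],
    (-1 : ℤ) ^ (A.card + U.card + 1) * (NN K A U : ℤ) =
      ((Fintype.card K : ℤ) - 1) * aeval (2 - (Fintype.card K : ℤ)) g

def Goal (A : Finset (Sym2 V)) (U : Finset V) : Prop :=
  ∃ g : ℕ[X], Good A U g ∧ (Light A U → 1 ≤ g.coeff 0) ∧ (QQ A U → 1 ≤ g.coeff 1)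

lemma cast_pred (K : Type) [Field K] [Fintype K] :
    ((Fintype.card K - 1 : ℕ) : ℤ) = (Fintype.card K : ℤ) - 1 :=
  Nat.cast_pred Fintype.card_pos

lemma NN_heavy {A : Finset (Sym2 V)} {U : Finset V} {v : V} (hv : v ∈ U)
    (h3 : (nb A v).card = 3) : NN (ZMod 2) A U = 0 := by
  unfold NN
  rw [card_eq_zero, eq_empty_iff_forall_notMem]
  intro φ hφ
  rw [mem_fl] at hφ
  have h := hφ.2 v hv
  rw [sum_nb hφ.1] at h
  have h1 : ∀ y ∈ nb A v, φ s(v, y) = 1 := by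
    intro y hy
    have := (hφ.1 _).2 (mem_nb.1 hy)
    revert this
    generalize φ s(v, y) = c
    revert c
    decide
  rw [sum_congr rfl h1, sum_const, h3] at h
  revert h
  decide

lemma Good.coeff_zero {A : Finset (Sym2 V)} {U : Finset V} {g : ℕ[X]} (h : Good A U g) {v : V}
    (hv : v ∈ U) (h3 : (nb A v).card = 3) : g.coeff 0 = 0 := by
  have := h (ZMod 2)
  rw [NN_heavy hv h3, ZMod.card] at this
  norm_num [aeval_def, eval₂_at_zero] at this
  exact_mod_cast this.symm

section
variable {A : Finset (Sym2 V)} {U : Finset V} {v w : V}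

lemma single_U (hOk : Ok A U) (hv : v ∈ U) (h : ∀ y, s(v, y) ∈ A → y ∉ U) : U = {v} := by
  by_contra hU
  obtain ⟨a, ha, b, hb, hab⟩ := hOk.conn {v} (by simpa using hv) (by simp) (Ne.symm hU)
  rw [mem_singleton] at ha
  subst ha
  exact h b hab (mem_sdiff.1 hb).1

lemma star (hOk : Ok A {v}) (x : V) (hx : nb A v = {x}) : A = {s(v, x)} := by
  have hx' : s(v, x) ∈ A := mem_nb.1 (by rw [hx]; simp)
  ext e
  induction e with
  | _ a b =>
  rw [mem_singleton]
  constructor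
  · intro h
    rcases hOk.touch a b h with h' | h'
    · rw [mem_singleton] at h'
      subst h'
      have := mem_nb.2 h
      rw [hx, mem_singleton] at this
      rw [this]
    · rw [mem_singleton] at h'
      subst h'
      rw [Sym2.eq_swap] at h ⊢
      have := mem_nb.2 h
      rw [hx, mem_singleton] at this
      rw [this]
  · intro h; rwa [h]

lemma case0 (hv : v ∈ U) (h : nb A v = {w}) : Goal A U := by
  have h1 : (nb A v).card = 1 := by rw [h]; simp
  refine ⟨0, ?_, ?_, ?_⟩
  · intro K _ _ _
    rw [NN_leaf hv h]; simp
  · intro hL; have := hL v hv; omega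
  · intro hQ; have := hQ.deg v hv; omega

/-- shrinking the root through `v` keeps everything fine -/
lemma Ok_contract {C : Finset (Sym2 V)} (hOk : Ok A U) (hv : v ∈ U) (hCA : C ⊆ A)
    (hC : ∀ a ∈ U.erase v, ∀ b, s(a, b) ∈ A → s(a, b) ∈ C)
    (hvC : ∀ b, s(v, b) ∈ C → b ∈ U.erase v)
    (hconn : Conn A (U.erase v)) {x : V} (hx : x ∈ U.erase v) (hvx : s(v, x) ∈ A) :
    Ok C (U.erase v) := by
  refine ⟨fun a h => hOk.nodiag a (hCA h), ?_, ?_, ?_, ?_⟩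
  · intro a b h
    rcases hOk.touch a b (hCA h) with h' | h'
    · by_cases hav : a = v
      · subst hav; right; exact hvC b h
      · left; exact mem_erase.2 ⟨hav, h'⟩
    · by_cases hav : b = v
      · subst hav; left; exact hvC a (by rwa [Sym2.eq_swap])
      · right; exact mem_erase.2 ⟨hav, h'⟩
  · intro u hu
    refine le_trans (card_le_card ?_) (hOk.deg u (mem_of_mem_erase hu))
    intro y hy
    exact mem_nb.2 (hCA (mem_nb.1 hy))
  · exact conn_congr hconn fun a ha b _ h => hC a ha b h
  · exact ⟨x, hx, v, by simp, hC x hx v (by rwa [Sym2.eq_swap])⟩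

lemma nb_eq_of {C : Finset (Sym2 V)} {S : Finset V} (hCA : C ⊆ A)
    (hC : ∀ a ∈ S, ∀ b, s(a, b) ∈ A → s(a, b) ∈ C) : ∀ a ∈ S, nb C a = nb A a := by
  intro a ha
  ext y
  rw [mem_nb, mem_nb]
  exact ⟨fun h => hCA h, hC a ha y⟩

lemma tt_eq_of {C : Finset (Sym2 V)} {S T S' : Finset V} (hCA : C ⊆ A)
    (hC : ∀ a ∈ S, ∀ b, s(a, b) ∈ A → s(a, b) ∈ C) (hS : S' ⊆ S) : tt C S' T = tt A S' T := by
  unfold tt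
  apply sum_congr rfl
  intro a ha
  apply sum_congr rfl
  intro b _
  have : s(a, b) ∈ C ↔ s(a, b) ∈ A := ⟨fun h => hCA h, hC a (hS ha) b⟩
  simp only [this]

lemma heavy_eq_of {C : Finset (Sym2 V)} {S S' : Finset V} (hCA : C ⊆ A)
    (hC : ∀ a ∈ S, ∀ b, s(a, b) ∈ A → s(a, b) ∈ C) (hS : S' ⊆ S) : Heavy C S' ↔ Heavy A S' := by
  have := nb_eq_of hCA hC
  constructor
  · rintro ⟨u, hu, h⟩
    exact ⟨u, hu, by rwa [this u (hS hu)] at h⟩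
  · rintro ⟨u, hu, h⟩
    exact ⟨u, hu, by rwa [this u (hS hu)]⟩

lemma mem_pair_cases {a b : V} {S : Finset V} (h : S = {a, b}) {y : V} (hy : y ∈ S) :
    y = a ∨ y = b := by
  rw [h] at hy; simpa using hy

lemma case1 (hOk : Ok A U) (hv : v ∈ U) (hw : w ∉ U) (he : s(v, w) ∈ A) {x : V}
    (hx : nb (A.erase s(v, w)) v = {x})
    (IH : ∀ (A' : Finset (Sym2 V)) (U' : Finset V), A'.card < A.card → Ok A' U' → Goal A' U') : Goal A U := by
  have hcA : (A.erase s(v, w)).card + 1 = A.card := card_erase_add_one he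
  have hcU : (U.erase v).card + 1 = U.card := card_erase_add_one hv
  have hnA : nb A v = {w, x} := by
    rw [← insert_erase (mem_nb.2 he), ← nb_erase_self, hx]
  have hxw : x ≠ w := by
    rintro rfl
    have : x ∈ nb (A.erase s(v, x)) v := by rw [hx]; simp
    rw [mem_nb] at this; simp at this
  have hcn : (nb A v).card = 2 := by rw [hnA, card_pair hxw.symm]
  have hvxA : s(v, x) ∈ A := by rw [← mem_nb, hnA]; simp
  have hvxB : s(v, x) ∈ A.erase s(v, w) := by rw [← mem_nb, hx]; simp
  have hleaf : ∀ (K : Type) [Field K] [Fintype K] [CharP K 2],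
      NN K A U = NN K (A.erase s(v, w)) (U.erase v) := by
    intro K _ _ _
    rw [← NN_dc hv hw he, NN_leaf (v := v) (U := U) hv hx, add_zero]
  by_cases hxU : x ∈ U
  · have hxv : x ≠ v := by rintro rfl; exact hOk.nodiag _ hvxA
    have hxE : x ∈ U.erase v := mem_erase.2 ⟨hxv, hxU⟩
    have hC : ∀ a ∈ U.erase v, ∀ b, s(a, b) ∈ A → s(a, b) ∈ A.erase s(v, w) := by
      intro a ha b hab
      rw [mem_erase] at ha
      rw [mem_erase, ne_eq, Sym2.eq_iff]
      refine ⟨?_, hab⟩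
      rintro (h | h)
      · exact ha.1 h.1
      · exact hw (h.1 ▸ ha.2)
    have hconn : Conn A (U.erase v) := by
      refine conn_part (x := x) hOk.conn (erase_subset _ _) ?_
      intro a ha b hb hab
      have hbv : b = v := by grind
      subst hbv
      rw [Sym2.eq_swap] at hab
      rcases mem_pair_cases hnA (mem_nb.2 hab) with h | h
      · exact absurd (mem_of_mem_erase ha) (h ▸ hw)
      · exact h
    have hOk' : Ok (A.erase s(v, w)) (U.erase v) := by
      refine Ok_contract hOk hv (erase_subset _ _) hC ?_ hconn hxE hvxA
      intro b hb
      have := mem_nb.2 hb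
      rw [hx, mem_singleton] at this
      rwa [this]
    obtain ⟨g, hg, hgL, hgQ⟩ := IH _ _ (by omega) hOk'
    have hCA : A.erase s(v, w) ⊆ A := erase_subset _ _
    refine ⟨g, ?_, ?_, ?_⟩
    · intro K _ _ _
      rw [hleaf, ← hg K, ← hcA, ← hcU]
      congr 1
      ring
    · intro hL
      apply hgL
      intro u hu
      rw [nb_eq_of hCA hC u hu]
      exact hL u (mem_of_mem_erase hu)
    · intro hQ
      apply hgQ
      have ddU : tt A (U.erase v) (U.erase v)ᶜ = tt A (U.erase v) Uᶜ + tt A (U.erase v) {v} := by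
        rw [← tt_union_right]
        · congr 1
          ext a; simp only [mem_compl, mem_union, mem_erase, mem_singleton]; grind
        · simpa using hv
      refine ⟨?_, ?_, ?_, ?_⟩
      · intro u hu
        rw [nb_eq_of hCA hC u hu]
        exact hQ.deg u (mem_of_mem_erase hu)
      · rw [heavy_eq_of hCA hC subset_rfl]
        obtain ⟨u, hu, h⟩ := hQ.heavy
        exact ⟨u, mem_erase.2 ⟨by rintro rfl; omega, hu⟩, h⟩
      · rw [tt_eq_of hCA hC subset_rfl, ddU]
        have h2 := hQ.two
        have e1 : tt A U Uᶜ = tt A {v} Uᶜ + tt A (U.erase v) Uᶜ := by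
          rw [← tt_union_left _ _ (by simp)]
          congr 1
          ext a; simp only [mem_union, mem_erase, mem_singleton]; grind
        have e2 : tt A {v} Uᶜ ≤ 1 := by
          simp only [tt, sum_singleton]
          rw [sum_eq_single w]
          · split_ifs <;> simp
          · intro b hb hbw
            rw [if_neg]
            intro h
            rcases mem_pair_cases hnA (mem_nb.2 h) with h | h
            · exact hbw h
            · rw [h, mem_compl] at hb; exact hb hxU
          · intro h; exact absurd (by simpa using hw) h
        have e3 : 1 ≤ tt A (U.erase v) {v} :=
          tt_pos hxE (mem_singleton_self v) (by rwa [Sym2.eq_swap])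
        omega
      · intro S hS h1 h2
        rw [heavy_eq_of hCA hC hS] at h1
        rw [heavy_eq_of hCA hC sdiff_subset] at h2
        rw [tt_eq_of hCA hC hS, tt_eq_of hCA hC hS]
        have hvS : v ∉ S := fun h => by simpa using hS h
        have hSU : S ⊆ U := hS.trans (erase_subset _ _)
        have hc := hQ.cut S hSU h1 (h2.mono (by
          intro a; simp only [mem_sdiff, mem_erase]; tauto))
        refine ⟨?_, hc.2⟩
        by_cases hxS : x ∈ S
        · have hc' := (hQ.cut (insert v S) (by
            intro a; simp only [mem_insert]; rintro (rfl | h); exacts [hv, hSU h])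
            (h1.mono (subset_insert _ _)) (by
              convert h2 using 1
              ext a; simp only [mem_sdiff, mem_insert, mem_erase]; tauto)).1
          have e : U \ insert v S = U.erase v \ S := by
            ext a; simp only [mem_sdiff, mem_insert, mem_erase]; tauto
          rw [e, insert_eq, tt_union_left _ _ (by simpa using hvS)] at hc'
          have : tt A {v} (U.erase v \ S) = 0 := by
            simp only [tt, sum_singleton]
            apply sum_eq_zero
            intro b hb
            rw [if_neg]
            intro h
            rcases mem_pair_cases hnA (mem_nb.2 h) with h | h
            · subst h; exact hw (mem_of_mem_erase (mem_sdiff.1 hb).1)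
            · subst h; exact (mem_sdiff.1 hb).2 hxS
          omega
        · have hc' := hc.1
          have e : U \ S = {v} ∪ (U.erase v \ S) := by
            ext a; simp only [mem_sdiff, mem_union, mem_singleton, mem_erase]; grind
          rw [e, tt_union_right _ _ (by simp)] at hc'
          have : tt A S {v} = 0 := by
            simp only [tt, sum_singleton]
            apply sum_eq_zero
            intro b hb
            rw [if_neg]
            intro h
            rw [Sym2.eq_swap] at h
            rcases mem_pair_cases hnA (mem_nb.2 h) with h | h
            · subst h; exact hw (hSU hb)
            · subst h; exact hxS hb
          omega
  · have hU : U = {v} := by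
      apply single_U hOk hv
      intro y hy
      rcases mem_pair_cases hnA (mem_nb.2 hy) with h | h
      · rwa [h]
      · rwa [h]
    have hB : A.erase s(v, w) = {s(v, x)} := by
      ext e
      induction e with
      | _ a b =>
      rw [mem_singleton]
      constructor
      · intro h
        rcases hOk.touch a b (mem_of_mem_erase h) with h' | h'
        · rw [hU, mem_singleton] at h'
          subst h'
          have := mem_nb.2 h
          rw [hx, mem_singleton] at this
          rw [this]
        · rw [hU, mem_singleton] at h'
          subst h'
          rw [(Sym2.eq_swap : s(a, b) = s(b, a))] at h ⊢
          have := mem_nb.2 h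
          rw [hx, mem_singleton] at this
          rw [this]
      · intro h; rwa [h]
    refine ⟨1, ?_, ?_, ?_⟩
    · intro K _ _ _
      rw [hleaf, hB, NN_loop (v := v) (w := x) (by simp) (by simp [hxU]) (by simp), hU]
      have : ({s(v, x)} : Finset (Sym2 V)).erase s(v, x) = ∅ := by simp
      rw [this]
      have : ({v} : Finset V).erase v = ∅ := by simp
      rw [this, NN_empty, mul_one, cast_pred, ← hcA, hB]
      simp
    · intro _; simp
    · intro hQ
      obtain ⟨u, hu, h⟩ := hQ.heavy
      rw [hU, mem_singleton] at hu
      subst hu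
      omega

end
end FlowAux

namespace FlowAux
open Finset Classical

set_option linter.unusedSectionVars false
set_option linter.unusedSimpArgs false
variable {V : Type} [Fintype V]

section
variable {A : Finset (Sym2 V)} {U : Finset V} {v w : V}

lemma case2a (hOk : Ok A U) (hv : v ∈ U) (hw : w ∉ U) (he : s(v, w) ∈ A) {x y : V} (hxy : x ≠ y)
    (hx : nb (A.erase s(v, w)) v = {x, y}) (hyU : y ∉ U)
    (IH : ∀ (A' : Finset (Sym2 V)) (U' : Finset V), A'.card < A.card → Ok A' U' → Goal A' U') :
    Goal A U := by
  have hcA : (A.erase s(v, w)).card + 1 = A.card := card_erase_add_one he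
  have hcU : (U.erase v).card + 1 = U.card := card_erase_add_one hv
  have hwn : w ∉ nb (A.erase s(v, w)) v := by simp [mem_nb]
  rw [hx] at hwn
  simp only [mem_insert, mem_singleton, not_or] at hwn
  have hnA : nb A v = {w, x, y} := by
    rw [← insert_erase (mem_nb.2 he), ← nb_erase_self, hx]
  have hcn : (nb A v).card = 3 := by
    rw [hnA, card_insert_of_notMem (by simp [hwn]), card_pair hxy]
  have hvxA : s(v, x) ∈ A := by rw [← mem_nb, hnA]; simp
  have hvyB : s(v, y) ∈ A.erase s(v, w) := by rw [← mem_nb, hx]; simp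
  obtain ⟨C, hCdef⟩ : ∃ C, C = (A.erase s(v, w)).erase s(v, y) := ⟨_, rfl⟩
  have hcC : C.card + 1 = (A.erase s(v, w)).card := by rw [hCdef]; exact card_erase_add_one hvyB
  have hnC : nb C v = {x} := by
    rw [hCdef, nb_erase_self, hx]
    ext a; simp only [mem_erase, mem_insert, mem_singleton]; grind
  have hCA : C ⊆ A := by rw [hCdef]; exact (erase_subset _ _).trans (erase_subset _ _)
  have hN : ∀ (K : Type) [Field K] [Fintype K] [CharP K 2],
      (NN K A U : ℤ) = ((Fintype.card K : ℤ) - 2) * NN K C (U.erase v) := by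
    intro K _ _ _
    have h1 := NN_dc (K := K) hv hw he
    have h2 := NN_loop (K := K) (U := U.erase v) (v := v) (w := y) (by simp) (by simp [hyU]) hvyB
    have h3 := NN_dc (K := K) hv hyU hvyB
    rw [← hCdef] at h2 h3
    rw [NN_leaf hv hnC] at h3
    zify at h1 h2 h3
    rw [cast_pred] at h2
    rw [add_zero] at h3
    rw [h2, h3] at h1
    linear_combination h1
  have hLf : ¬ Light A U := fun hL => by have := hL v hv; omega
  by_cases hxU : x ∈ U
  · have hxv : x ≠ v := by rintro rfl; exact hOk.nodiag _ hvxA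
    have hxE : x ∈ U.erase v := mem_erase.2 ⟨hxv, hxU⟩
    have hC : ∀ a ∈ U.erase v, ∀ b, s(a, b) ∈ A → s(a, b) ∈ C := by
      intro a ha b hab
      rw [mem_erase] at ha
      rw [hCdef, mem_erase, mem_erase, ne_eq, ne_eq, Sym2.eq_iff, Sym2.eq_iff]
      refine ⟨?_, ?_, hab⟩
      · rintro (h | h)
        · exact ha.1 h.1
        · exact hyU (h.1 ▸ ha.2)
      · rintro (h | h)
        · exact ha.1 h.1
        · exact hw (h.1 ▸ ha.2)
    have hconn : Conn A (U.erase v) := by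
      refine conn_part (x := x) hOk.conn (erase_subset _ _) ?_
      intro a ha b hb hab
      have hbv : b = v := by grind
      subst hbv
      rw [Sym2.eq_swap] at hab
      have := mem_nb.2 hab
      rw [hnA] at this
      simp only [mem_insert, mem_singleton] at this
      rcases this with h | h | h
      · exact absurd (mem_of_mem_erase ha) (h ▸ hw)
      · exact h
      · exact absurd (mem_of_mem_erase ha) (h ▸ hyU)
    have hOk' : Ok C (U.erase v) := by
      refine Ok_contract hOk hv hCA hC ?_ hconn hxE hvxA
      intro b hb
      have := mem_nb.2 hb
      rw [hnC, mem_singleton] at this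
      rwa [this]
    obtain ⟨g, hg, hgL, hgQ⟩ := IH _ _ (by omega) hOk'
    refine ⟨X * g, ?_, fun h => absurd h hLf, ?_⟩
    · intro K _ _ _
      have := hg K
      rw [hN, map_mul, aeval_X, ← hcA, ← hcU, ← hcC]
      linear_combination (2 - (Fintype.card K : ℤ)) * this
    · intro hQ
      rw [coeff_X_mul]
      apply hgL
      intro u hu
      rw [nb_eq_of hCA hC u hu]
      rcases hQ.deg u (mem_of_mem_erase hu) with h | h
      · exact h
      · exfalso
        have h2 := (hQ.cut {v} (by simpa using hv) ⟨v, by simp, hcn⟩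
          ⟨u, by simpa [and_comm] using hu, h⟩).1
        simp only [tt, sum_singleton] at h2
        rw [sum_eq_single x] at h2
        · rw [if_pos hvxA] at h2; omega
        · intro b hb hbx
          rw [if_neg]
          intro h
          have := mem_nb.2 h
          rw [hnA] at this
          simp only [mem_insert, mem_singleton] at this
          have hb := (mem_sdiff.1 hb).1
          rcases this with h | h | h
          · exact hw (h ▸ hb)
          · exact hbx h
          · exact hyU (h ▸ hb)
        · intro h; exact absurd (by simp [hxU, hxv]) h
  · have hU : U = {v} := by
      apply single_U hOk hv
      intro z hz
      have := mem_nb.2 hz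
      rw [hnA] at this
      simp only [mem_insert, mem_singleton] at this
      rcases this with h | h | h <;> rwa [h]
    have hB : C = {s(v, x)} := by
      ext e
      induction e with
      | _ a b =>
      rw [mem_singleton]
      constructor
      · intro h
        rcases hOk.touch a b (hCA h) with h' | h'
        · rw [hU, mem_singleton] at h'
          subst h'
          have := mem_nb.2 h
          rw [hnC, mem_singleton] at this
          rw [this]
        · rw [hU, mem_singleton] at h'
          subst h'
          rw [(Sym2.eq_swap : s(a, b) = s(b, a))] at h ⊢
          have := mem_nb.2 h
          rw [hnC, mem_singleton] at this
          rw [this]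
      · intro h; rw [h, ← mem_nb, hnC]; simp
    refine ⟨X, ?_, fun h => absurd h hLf, by simp⟩
    intro K _ _ _
    rw [hN, hB, NN_loop (v := v) (w := x) (by simp) (by simp [hxU]) (by simp), hU]
    have : ({s(v, x)} : Finset (Sym2 V)).erase s(v, x) = ∅ := by simp
    rw [this]
    have : ({v} : Finset V).erase v = ∅ := by simp
    rw [this, NN_empty, mul_one, cast_pred, ← hcA, ← hcC, hB]
    simp
    ring

end
end FlowAux

namespace FlowAux
open Finset Classical

set_option linter.unusedSectionVars false
set_option linter.unusedSimpArgs false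
variable {V : Type} [Fintype V]

section
variable {A : Finset (Sym2 V)} {U : Finset V} {v w : V}

lemma light_part {S : Finset V} {x : V} (hQ : QQ A U) (hv : v ∈ U) (h3 : (nb A v).card = 3)
    (hS : S ⊆ U) (hvS : v ∉ S)
    (hx : ∀ a ∈ S, ∀ b ∈ U \ S, s(a, b) ∈ A → a = x ∧ b = v) : Light A S := by
  intro u hu
  rcases hQ.deg u (hS hu) with h | h
  · exact h
  · exfalso
    have h2 := (hQ.cut S hS ⟨u, hu, h⟩ ⟨v, mem_sdiff.2 ⟨hv, hvS⟩, h3⟩).1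
    have : tt A S (U \ S) ≤ 1 := by
      unfold tt
      calc _ ≤ ∑ a ∈ S, ∑ b ∈ U \ S, if a = x ∧ b = v then 1 else 0 := by
            apply sum_le_sum; intro a ha
            apply sum_le_sum; intro b hb
            split_ifs with p q
            · exact le_rfl
            · exact absurd (hx a ha b hb p) q
            · simp
            · simp
        _ = ∑ a ∈ S, if a = x then (if v ∈ U \ S then 1 else 0) else 0 := by
            apply sum_congr rfl; intro a _
            by_cases hax : a = x <;> simp [hax]
        _ ≤ 1 := by
            rw [sum_ite_eq']; split_ifs <;> simp
    omega

lemma ok_part {C : Finset (Sym2 V)} {S : Finset V} {x : V} (hOk : Ok A U) (hS : S ⊆ U)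
    (hvS : v ∉ S) (hx : ∀ a ∈ S, ∀ b ∈ U \ S, s(a, b) ∈ A → a = x) (hxS : x ∈ S)
    (hCA : C ⊆ A) (hC : ∀ a ∈ S, ∀ b, s(a, b) ∈ A → s(a, b) ∈ C)
    (ht : ∀ a b, s(a, b) ∈ C → a ∈ S ∨ b ∈ S) (hxv : s(x, v) ∈ A) : Ok C S := by
  refine ⟨fun a h => hOk.nodiag a (hCA h), ht, ?_, ?_, ?_⟩
  · intro u hu
    rw [nb_eq_of hCA hC u hu]
    exact hOk.deg u (hS hu)
  · exact conn_congr (conn_part hOk.conn hS hx) fun a ha b _ h => hC a ha b h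
  · exact ⟨x, hxS, v, hvS, hC x hxS v hxv⟩

lemma case2b_aux (hOk : Ok A U) (hv : v ∈ U) (hw : w ∉ U) (he : s(v, w) ∈ A) {x y : V}
    (hxy : x ≠ y) (hx : nb (A.erase s(v, w)) v = {x, y}) {S T : Finset V}
    (hST : U.erase v = S ∪ T) (hd : Disjoint S T) (hno : ∀ a ∈ S, ∀ b ∈ T, s(a, b) ∉ A)
    (hxS : x ∈ S) (hyT : y ∈ T)
    (IH : ∀ (A' : Finset (Sym2 V)) (U' : Finset V), A'.card < A.card → Ok A' U' → Goal A' U') :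
    Goal A U := by
  have hcA : (A.erase s(v, w)).card + 1 = A.card := card_erase_add_one he
  have hcU : (U.erase v).card + 1 = U.card := card_erase_add_one hv
  have hwn : w ∉ nb (A.erase s(v, w)) v := by simp [mem_nb]
  rw [hx] at hwn
  simp only [mem_insert, mem_singleton, not_or] at hwn
  have hnA : nb A v = {w, x, y} := by
    rw [← insert_erase (mem_nb.2 he), ← nb_erase_self, hx]
  have hcn : (nb A v).card = 3 := by
    rw [hnA, card_insert_of_notMem (by simp [hwn]), card_pair hxy]
  have hLf : ¬ Light A U := fun hL => by have := hL v hv; omega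
  have hvxB : s(v, x) ∈ A.erase s(v, w) := by rw [← mem_nb, hx]; simp
  have hvyB : s(v, y) ∈ A.erase s(v, w) := by rw [← mem_nb, hx]; simp
  have hvE : v ∉ S ∪ T := by rw [← hST]; simp
  have hvS : v ∉ S := fun h => hvE (mem_union_left _ h)
  have hvT : v ∉ T := fun h => hvE (mem_union_right _ h)
  have hSU : S ⊆ U := by
    intro a ha; apply mem_of_mem_erase (a := v); rw [hST]; exact mem_union_left _ ha
  have hTU : T ⊆ U := by
    intro a ha; apply mem_of_mem_erase (a := v); rw [hST]; exact mem_union_right _ ha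
  have hins : insert v (S ∪ T) = U := by rw [← hST, insert_erase hv]
  have hUc : ∀ a ∈ U, a = v ∨ a ∈ S ∨ a ∈ T := by
    intro a ha; rw [← hins] at ha; simpa using ha
  have hnv : ∀ a, s(a, v) ∈ A → a ∈ U → a = x ∨ a = y := by
    intro a ha haU
    rw [Sym2.eq_swap] at ha
    have := mem_nb.2 ha
    rw [hnA] at this
    simp only [mem_insert, mem_singleton] at this
    rcases this with h | h
    · exact absurd haU (h ▸ hw)
    · exact h
  have hxe : ∀ a ∈ S, ∀ b ∈ U \ S, s(a, b) ∈ A → a = x ∧ b = v := by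
    intro a ha b hb hab
    have hb := mem_sdiff.1 hb
    rcases hUc b hb.1 with h | h | h
    · subst h
      refine ⟨?_, rfl⟩
      rcases hnv a hab (hSU ha) with h | h
      · exact h
      · exact absurd ha (h ▸ disjoint_right.1 hd hyT)
    · exact absurd h hb.2
    · exact absurd hab (hno a ha b h)
  have hye : ∀ a ∈ T, ∀ b ∈ U \ T, s(a, b) ∈ A → a = y ∧ b = v := by
    intro a ha b hb hab
    have hb := mem_sdiff.1 hb
    rcases hUc b hb.1 with h | h | h
    · subst h
      refine ⟨?_, rfl⟩
      rcases hnv a hab (hTU ha) with h | h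
      · exact absurd ha (h ▸ disjoint_left.1 hd hxS)
      · exact h
    · rw [Sym2.eq_swap] at hab; exact absurd hab (hno b h a ha)
    · exact absurd h hb.2
  obtain ⟨A1, hA1⟩ : ∃ A1, A1 = (A.erase s(v, w)).filter (fun e => ∃ a ∈ S, a ∈ e) := ⟨_, rfl⟩
  obtain ⟨A2, hA2⟩ : ∃ A2, A2 = (A.erase s(v, w)).filter (fun e => ∃ a ∈ T, a ∈ e) := ⟨_, rfl⟩
  have m1 : ∀ a b, s(a, b) ∈ A1 ↔ s(a, b) ∈ A.erase s(v, w) ∧ (a ∈ S ∨ b ∈ S) := by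
    intro a b
    rw [hA1, mem_filter]
    apply and_congr_right; intro _
    simp only [Sym2.mem_iff]
    grind
  have m2 : ∀ a b, s(a, b) ∈ A2 ↔ s(a, b) ∈ A.erase s(v, w) ∧ (a ∈ T ∨ b ∈ T) := by
    intro a b
    rw [hA2, mem_filter]
    apply and_congr_right; intro _
    simp only [Sym2.mem_iff]
    grind
  have hB1 : A1 ⊆ A.erase s(v, w) := by rw [hA1]; exact filter_subset _ _
  have hB2 : A2 ⊆ A.erase s(v, w) := by rw [hA2]; exact filter_subset _ _
  have hCA1 : A1 ⊆ A := hB1.trans (erase_subset _ _)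
  have hCA2 : A2 ⊆ A := hB2.trans (erase_subset _ _)
  have hnovw : ∀ a ∈ U, a ≠ v → ∀ b, s(a, b) ∈ A → s(a, b) ∈ A.erase s(v, w) := by
    intro a ha hav b hab
    rw [mem_erase, ne_eq, Sym2.eq_iff]
    refine ⟨?_, hab⟩
    rintro (h | h)
    · exact hav h.1
    · exact hw (h.1 ▸ ha)
  have hC1 : ∀ a ∈ S, ∀ b, s(a, b) ∈ A → s(a, b) ∈ A1 := by
    intro a ha b hab
    exact (m1 a b).2 ⟨hnovw a (hSU ha) (by rintro rfl; exact hvS ha) b hab, Or.inl ha⟩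
  have hC2 : ∀ a ∈ T, ∀ b, s(a, b) ∈ A → s(a, b) ∈ A2 := by
    intro a ha b hab
    exact (m2 a b).2 ⟨hnovw a (hTU ha) (by rintro rfl; exact hvT ha) b hab, Or.inl ha⟩
  have hOk1 : Ok A1 S := ok_part hOk hSU hvS (fun a ha b hb h => (hxe a ha b hb h).1) hxS hCA1 hC1
    (fun a b h => ((m1 a b).1 h).2) (by rw [Sym2.eq_swap]; exact mem_of_mem_erase hvxB)
  have hOk2 : Ok A2 T := ok_part hOk hTU hvT (fun a ha b hb h => (hye a ha b hb h).1) hyT hCA2 hC2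
    (fun a b h => ((m2 a b).1 h).2) (by rw [Sym2.eq_swap]; exact mem_of_mem_erase hvyB)
  have hT1 : ∀ z ∈ T, ∀ b, s(z, b) ∉ A1 := by
    intro z hz b h
    rcases ((m1 z b).1 h).2 with h' | h'
    · exact disjoint_left.1 hd h' hz
    · have := hCA1 h
      rw [Sym2.eq_swap] at this
      exact hno b h' z hz this
  have hS2 : ∀ z ∈ S, ∀ b, s(z, b) ∉ A2 := by
    intro z hz b h
    rcases ((m2 z b).1 h).2 with h' | h'
    · exact disjoint_left.1 hd hz h'
    · exact hno z hz b h' (hCA2 h)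
  have hun : A.erase s(v, w) = A1 ∪ A2 := by
    apply subset_antisymm
    · intro e
      induction e with
      | _ a b =>
      intro h
      rw [mem_union, m1, m2]
      have hk : ∀ a b, s(a, b) ∈ A.erase s(v, w) → a ∈ U → (a ∈ S ∨ b ∈ S) ∨ (a ∈ T ∨ b ∈ T) := by
        intro a b h ha
        rcases hUc a ha with h' | h' | h'
        · subst h'
          have := mem_nb.2 h
          rw [hx] at this
          simp only [mem_insert, mem_singleton] at this
          rcases this with h' | h'
          · left; right; rwa [h']
          · right; right; rwa [h']
        · exact Or.inl (Or.inl h')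
        · exact Or.inr (Or.inl h')
      rcases hOk.touch a b (mem_of_mem_erase h) with h' | h'
      · have := hk a b h h'
        tauto
      · have := hk b a (by rwa [(Sym2.eq_swap : s(b, a) = s(a, b))]) h'
        tauto
    · exact union_subset hB1 hB2
  have hdis : Disjoint A1 A2 := by
    rw [disjoint_left]
    intro e
    induction e with
    | _ a b =>
    intro h1 h2
    rcases ((m1 a b).1 h1).2 with h' | h'
    · exact hS2 a h' b h2
    · rw [Sym2.eq_swap] at h2; exact hS2 b h' a h2
  have hcB : A1.card + A2.card = (A.erase s(v, w)).card := by
    rw [hun, card_union_of_disjoint hdis]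
  have hcST : S.card + T.card = (U.erase v).card := by
    rw [hST, card_union_of_disjoint hd]
  have hx1 : s(v, x) ∈ A1 := (m1 _ _).2 ⟨hvxB, Or.inr hxS⟩
  have hy2 : s(v, y) ∈ A2 := (m2 _ _).2 ⟨hvyB, Or.inr hyT⟩
  obtain ⟨g1, hg1, hgL1, -⟩ := IH _ _ (by omega) hOk1
  obtain ⟨g2, hg2, hgL2, -⟩ := IH _ _ (by omega) hOk2
  refine ⟨X * (g1 * g2), ?_, fun h => absurd h hLf, ?_⟩
  · intro K _ _ _
    have e1 := NN_dc (K := K) hv hw he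
    have e2 := NN_prod (K := K) hun hdis hT1 hS2
    have e3 := NN_series (K := K) hun hdis hT1 hS2 hvS hvT hxy hx hx1 hy2
    rw [← hST] at e2
    rw [hins] at e3
    have i1 := hg1 K
    have i2 := hg2 K
    have hK : (1 : ℤ) < Fintype.card K := by exact_mod_cast Fintype.one_lt_card
    zify at e1 e2 e3
    rw [cast_pred] at e3
    rw [map_mul, map_mul, aeval_X, ← hcA, ← hcU, ← hcST, ← hcB]
    set t : ℤ := (Fintype.card K : ℤ)
    have hne : t - 1 ≠ 0 := by omega
    apply mul_left_cancel₀ hne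
    have hs : (-1 : ℤ) ^ (A1.card + A2.card + 1 + (S.card + T.card + 1) + 1) =
        -((-1) ^ (A1.card + S.card + 1) * (-1) ^ (A2.card + T.card + 1)) := by ring
    rw [hs]
    have key : (t - 1) * (NN K A U : ℤ) = (t - 2) * ((NN K A1 S : ℤ) * NN K A2 T) := by
      linear_combination (t - 1) * e1 + (t - 1) * e2 - e3
    linear_combination (-((-1) ^ (A1.card + S.card + 1) * (-1) ^ (A2.card + T.card + 1))) * key
      + (2 - t) * ((-1) ^ (A2.card + T.card + 1) * (NN K A2 T : ℤ)) * i1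
      + (2 - t) * ((t - 1) * aeval (2 - t) g1) * i2
  · intro hQ
    rw [coeff_X_mul, mul_coeff_zero]
    have L1 := light_part hQ hv hcn hSU hvS hxe
    have L2 := light_part hQ hv hcn hTU hvT hye
    have k1 := hgL1 (fun u hu => by rw [nb_eq_of hCA1 hC1 u hu]; exact L1 u hu)
    have k2 := hgL2 (fun u hu => by rw [nb_eq_of hCA2 hC2 u hu]; exact L2 u hu)
    exact Nat.mul_pos k1 k2

lemma case2b (hOk : Ok A U) (hv : v ∈ U) (hw : w ∉ U) (he : s(v, w) ∈ A) {x y : V}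
    (hxy : x ≠ y) (hx : nb (A.erase s(v, w)) v = {x, y}) (hnc : ¬ Conn A (U.erase v))
    (IH : ∀ (A' : Finset (Sym2 V)) (U' : Finset V), A'.card < A.card → Ok A' U' → Goal A' U') :
    Goal A U := by
  unfold Conn at hnc
  push Not at hnc
  obtain ⟨S, hS, hne, hneq, hno⟩ := hnc
  have hvS : v ∉ S := fun h => by simpa using hS h
  have hst : U.erase v = S ∪ (U.erase v \ S) := by rw [union_sdiff_of_subset hS]
  have hd : Disjoint S (U.erase v \ S) := disjoint_sdiff
  have hnA : nb A v = {w, x, y} := by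
    rw [← insert_erase (mem_nb.2 he), ← nb_erase_self, hx]
  have hnv : ∀ a, s(a, v) ∈ A → a ∈ U → a = x ∨ a = y := by
    intro a ha haU
    rw [Sym2.eq_swap] at ha
    have := mem_nb.2 ha
    rw [hnA] at this
    simp only [mem_insert, mem_singleton] at this
    rcases this with h | h
    · exact absurd haU (h ▸ hw)
    · exact h
  have hSU : S ⊆ U := hS.trans (erase_subset _ _)
  obtain ⟨a, ha, b, hb, hab⟩ := hOk.conn S hSU hne (by rintro rfl; exact hvS hv)
  have hbv : b = v := by
    by_contra hbv
    exact hno a ha b (by simp only [mem_sdiff, mem_erase] at hb ⊢; tauto) hab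
  subst hbv
  have hne2 : (U.erase b \ S).Nonempty := by
    rw [sdiff_nonempty]; intro h; exact hneq (subset_antisymm hS h)
  obtain ⟨a', ha', b', hb', hab'⟩ := hOk.conn (U.erase b \ S) (sdiff_subset.trans (erase_subset _ _))
    hne2 (by intro h; rw [← h] at hv; simp at hv)
  have hbv' : b' = b := by
    by_contra hbv
    have : b' ∈ S := by simp only [mem_sdiff, mem_erase] at hb'; tauto
    rw [Sym2.eq_swap] at hab'
    exact hno b' this a' ha' hab'
  subst hbv'
  have ha'U : a' ∈ U := mem_of_mem_erase (mem_sdiff.1 ha').1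
  have h1 := hnv a hab (hSU ha)
  have h2 := hnv a' hab' ha'U
  have haa : a ≠ a' := by rintro rfl; exact (mem_sdiff.1 ha').2 ha
  rcases h1 with h1 | h1 <;> rcases h2 with h2 | h2
  · exact absurd (h1.trans h2.symm) haa
  · subst h1 h2
    exact case2b_aux hOk hv hw he hxy hx hst hd hno ha ha' IH
  · subst h1 h2
    exact case2b_aux hOk hv hw he hxy.symm (by rw [hx, pair_comm]) hst hd hno ha ha' IH
  · exact absurd (h1.trans h2.symm) haa

lemma case2c (hOk : Ok A U) (hv : v ∈ U) (hw : w ∉ U) (he : s(v, w) ∈ A) {x y : V}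
    (hxy : x ≠ y) (hx : nb (A.erase s(v, w)) v = {x, y}) (hxU : x ∈ U) (hyU : y ∈ U)
    (hc : Conn A (U.erase v))
    (IH : ∀ (A' : Finset (Sym2 V)) (U' : Finset V), A'.card < A.card → Ok A' U' → Goal A' U') :
    Goal A U := by
  have hcA : (A.erase s(v, w)).card + 1 = A.card := card_erase_add_one he
  have hcU : (U.erase v).card + 1 = U.card := card_erase_add_one hv
  have hwn : w ∉ nb (A.erase s(v, w)) v := by simp [mem_nb]
  rw [hx] at hwn
  simp only [mem_insert, mem_singleton, not_or] at hwn
  have hnA : nb A v = {w, x, y} := by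
    rw [← insert_erase (mem_nb.2 he), ← nb_erase_self, hx]
  have hcn : (nb A v).card = 3 := by
    rw [hnA, card_insert_of_notMem (by simp [hwn]), card_pair hxy]
  have hLf : ¬ Light A U := fun hL => by have := hL v hv; omega
  have hvxA : s(v, x) ∈ A := by rw [← mem_nb, hnA]; simp
  have hvyA : s(v, y) ∈ A := by rw [← mem_nb, hnA]; simp
  have hxv : x ≠ v := by rintro rfl; exact hOk.nodiag _ hvxA
  have hyv : y ≠ v := by rintro rfl; exact hOk.nodiag _ hvyA
  have hCA : A.erase s(v, w) ⊆ A := erase_subset _ _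
  by_cases huniq : ∀ a ∈ U, ∀ b, b ∉ U → s(a, b) ∈ A → a = v ∧ b = w
  · refine ⟨0, ?_, fun h => absurd h hLf, ?_⟩
    · intro K _ _ _
      rw [NN_bridge hOk.nodiag hv hw he huniq]; simp
    · intro hQ
      exfalso
      have h2 := hQ.two
      have := tt_erase (A := A) (S := U) (T := Uᶜ) disjoint_compl_right hv (mem_compl.2 hw) he
      have h0 : tt (A.erase s(v, w)) U Uᶜ = 0 := by
        unfold tt
        apply sum_eq_zero; intro a ha
        apply sum_eq_zero; intro b hb
        rw [if_neg]
        intro h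
        obtain ⟨rfl, rfl⟩ := huniq a ha b (mem_compl.1 hb) (hCA h)
        simp at h
      omega
  · push Not at huniq
    obtain ⟨a, ha, b, hb, hab, hne⟩ := huniq
    have hC : ∀ a ∈ U.erase v, ∀ b, s(a, b) ∈ A → s(a, b) ∈ A.erase s(v, w) := by
      intro a ha b hab
      rw [mem_erase] at ha
      rw [mem_erase, ne_eq, Sym2.eq_iff]
      refine ⟨?_, hab⟩
      rintro (h | h)
      · exact ha.1 h.1
      · exact hw (h.1 ▸ ha.2)
    have hOk1 : Ok (A.erase s(v, w)) (U.erase v) := by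
      refine Ok_contract hOk hv hCA hC ?_ hc (mem_erase.2 ⟨hxv, hxU⟩) hvxA
      intro b hb
      rcases mem_pair_cases hx (mem_nb.2 hb) with h | h
      · rw [h]; exact mem_erase.2 ⟨hxv, hxU⟩
      · rw [h]; exact mem_erase.2 ⟨hyv, hyU⟩
    have hOk2 : Ok (A.erase s(v, w)) U := by
      refine ⟨fun a h => hOk.nodiag a (hCA h), fun a b h => hOk.touch a b (hCA h), ?_, ?_, ?_⟩
      · intro u hu
        refine le_trans (card_le_card ?_) (hOk.deg u hu)
        intro y hy
        exact mem_nb.2 (hCA (mem_nb.1 hy))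
      · refine conn_congr hOk.conn ?_
        intro a ha b hb hab
        rw [mem_erase, ne_eq, Sym2.eq_iff]
        refine ⟨?_, hab⟩
        rintro (h | h)
        · exact hw (h.2 ▸ hb)
        · exact hw (h.1 ▸ ha)
      · refine ⟨a, ha, b, hb, ?_⟩
        rw [mem_erase, ne_eq, Sym2.eq_iff]
        refine ⟨?_, hab⟩
        rintro (h | h)
        · exact hne h.1 h.2
        · exact hw (h.1 ▸ ha)
    obtain ⟨g1, hg1, hgL1, hgQ1⟩ := IH _ _ (by omega) hOk1
    obtain ⟨g2, hg2, hgL2, hgQ2⟩ := IH _ _ (by omega) hOk2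
    have hGood : Good A U (g1 + g2) := by
      intro K _ _ _
      have e1 := NN_dc (K := K) hv hw he
      have i1 := hg1 K
      have i2 := hg2 K
      zify at e1
      rw [map_add]
      rw [← hcA, ← hcU]
      rw [← hcU] at i2
      linear_combination (-1) ^ ((A.erase s(v, w)).card + (U.erase v).card + 1) * e1 + i1 + i2
    refine ⟨g1 + g2, hGood, fun h => absurd h hLf, ?_⟩
    intro hQ
    have h0 := hGood.coeff_zero hv hcn
    rw [coeff_add] at h0 ⊢
    have hh : Heavy A (U.erase v) := by
      by_contra hh
      have : Light (A.erase s(v, w)) (U.erase v) := by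
        intro u hu
        rw [nb_eq_of hCA hC u hu]
        rcases hQ.deg u (mem_of_mem_erase hu) with h | h
        · exact h
        · exact absurd ⟨u, hu, h⟩ hh
      have := hgL1 this
      omega
    by_cases hgood : ∀ S ⊆ U.erase v, Heavy A S → Heavy A (U.erase v \ S) →
        2 ≤ tt A S (U.erase v \ S)
    · have := hgQ1 (QQ_good hv hw hcn hQ hxU hxv hyU hyv hxy hvxA hvyA hh hgood)
      omega
    · push Not at hgood
      obtain ⟨S, hS, k1, k2, k3⟩ := hgood
      have := hgQ2 (QQ_bad hv hw he hcn hQ hS k1 k2 (by omega))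
      omega

end

theorem main_ind : ∀ (n : ℕ) (A : Finset (Sym2 V)) (U : Finset V), A.card = n → Ok A U →
    Goal A U := by
  intro n
  induction n using Nat.strong_induction_on with
  | _ n ih =>
  intro A U hn hOk
  have IH : ∀ (A' : Finset (Sym2 V)) (U' : Finset V), A'.card < A.card → Ok A' U' → Goal A' U' :=
    fun A' U' h => ih _ (hn ▸ h) A' U' rfl
  obtain ⟨v, hv, w, hw, he⟩ := hOk.dang
  have h3 := hOk.deg v hv
  have hc : (nb (A.erase s(v, w)) v).card + 1 = (nb A v).card := by
    rw [nb_erase_self]; exact card_erase_add_one (mem_nb.2 he)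
  have hcases : (nb (A.erase s(v, w)) v).card = 0 ∨ (nb (A.erase s(v, w)) v).card = 1 ∨
    (nb (A.erase s(v, w)) v).card = 2 := by omega
  rcases hcases with h | h | h
  · refine case0 hv (w := w) ?_
    rw [← insert_erase (mem_nb.2 he), ← nb_erase_self, card_eq_zero.1 h, insert_empty_eq]
  · obtain ⟨x, hx⟩ := card_eq_one.1 h
    exact case1 hOk hv hw he hx IH
  · obtain ⟨x, y, hxy, hx⟩ := card_eq_two.1 h
    by_cases hyU : y ∈ U
    · by_cases hxU : x ∈ U
      · by_cases hcn : Conn A (U.erase v)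
        · exact case2c hOk hv hw he hxy hx hxU hyU hcn IH
        · exact case2b hOk hv hw he hxy hx hcn IH
      · exact case2a hOk hv hw he hxy.symm (by rw [hx, pair_comm]) hxU IH
    · exact case2a hOk hv hw he hxy hx hyU IH

end FlowAux

namespace FlowAux
open Finset Classical

set_option linter.unusedSectionVars false
set_option linter.unusedSimpArgs false
variable {V : Type} [Fintype V]

/-- all flows supported in `Z` -/
noncomputable def MM (K : Type) [Field K] [Fintype K] (Z : Finset (Sym2 V)) :
    Finset (Sym2 V → K) :=
  univ.filter (fun φ => (∀ e, e ∉ Z → φ e = 0) ∧ ∀ v, ∑ y, φ s(v, y) = 0)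

noncomputable def comps (Z : Finset (Sym2 V)) : ℕ :=
  Nat.card (SimpleGraph.fromEdgeSet (↑Z : Set (Sym2 V))).ConnectedComponent

section
variable {K : Type} [Field K] [Fintype K]

noncomputable def inc (K : Type) [Field K] (Z : Finset (Sym2 V)) : Matrix V Z K :=
  fun v e => if v ∈ e.1 then 1 else 0

lemma sum_star (φ : Sym2 V → K) (v : V) :
    ∑ y, φ s(v, y) = ∑ e : Sym2 V, if v ∈ e then φ e else 0 := by
  rw [← sum_filter]
  refine sum_bij (fun y _ => s(v, y)) ?_ ?_ ?_ ?_
  · intro a _; simp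
  · intro a _ b _ h
    rcases Sym2.eq_iff.1 h with h | h
    · exact h.2
    · exact h.2.trans h.1
  · intro e he
    rw [mem_filter] at he
    obtain ⟨y, hy⟩ := he.2
    exact ⟨y, mem_univ _, hy.symm⟩
  · intros; rfl

lemma card_MM_ker (Z : Finset (Sym2 V)) :
    (MM K Z).card = Fintype.card K ^ Module.finrank K (LinearMap.ker (inc K Z).mulVecLin) := by
  rw [← Module.card_eq_pow_finrank, ← Fintype.card_coe]
  have hsum : ∀ (φ : Sym2 V → K), (∀ e, e ∉ Z → φ e = 0) → ∀ v,
      ∑ y, φ s(v, y) = ((inc K Z).mulVecLin (fun e => φ e.1)) v := by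
    intro φ hφ v
    rw [sum_star, Matrix.mulVecLin_apply]
    simp only [Matrix.mulVec, dotProduct, inc, ite_mul, one_mul, zero_mul]
    rw [sum_coe_sort Z (fun e => if v ∈ e then φ e else 0)]
    symm
    apply sum_subset (subset_univ _)
    intro e _ he
    rw [hφ e he, ite_self]
  apply Fintype.card_congr
  refine ⟨fun φ => ⟨fun e => φ.1 e.1, ?_⟩,
    fun ψ => ⟨fun e => if h : e ∈ Z then ψ.1 ⟨e, h⟩ else 0, ?_⟩, ?_, ?_⟩
  · have := φ.2
    simp only [MM, mem_filter, mem_univ, true_and] at this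
    rw [LinearMap.mem_ker]
    funext v
    rw [← hsum _ this.1, this.2]; rfl
  · simp only [MM, mem_filter, mem_univ, true_and]
    have h0 : ∀ e, e ∉ Z → (if h : e ∈ Z then ψ.1 ⟨e, h⟩ else 0) = 0 := by
      intro e he; rw [dif_neg he]
    refine ⟨h0, ?_⟩
    intro v
    rw [hsum (fun e => if h : e ∈ Z then ψ.1 ⟨e, h⟩ else 0) h0 v]
    have := ψ.2
    rw [LinearMap.mem_ker] at this
    have e0 : (fun e : Z => if h : e.1 ∈ Z then ψ.1 ⟨e.1, h⟩ else 0) = ψ.1 := by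
      funext e; simp
    rw [e0]
    exact congrFun this v
  · intro φ
    have := φ.2
    simp only [MM, mem_filter, mem_univ, true_and] at this
    ext e
    by_cases h : e ∈ Z
    · simp [h]
    · simp [h, this.1 e h]
  · intro ψ
    ext e
    simp

lemma ker_transpose [CharP K 2] (Z : Finset (Sym2 V)) (hd : ∀ v, s(v, v) ∉ Z) :
    LinearMap.ker (inc K Z).transpose.mulVecLin = LinearMap.range (LinearMap.funLeft K K
      (SimpleGraph.fromEdgeSet (↑Z : Set (Sym2 V))).connectedComponentMk) := by
  have hval : ∀ (p : V → K) (a b : V) (h : s(a, b) ∈ Z),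
      ((inc K Z).transpose.mulVecLin p) ⟨s(a, b), h⟩ = p a + p b := by
    intro p a b h
    have hab : a ≠ b := by rintro rfl; exact hd a h
    rw [Matrix.mulVecLin_apply]
    simp only [Matrix.mulVec, dotProduct, inc, Matrix.transpose_apply, ite_mul, one_mul, zero_mul]
    rw [← sum_filter]
    have : univ.filter (fun x => x ∈ s(a, b)) = {a, b} := by ext x; simp
    rw [this, sum_pair hab]
  ext p
  rw [LinearMap.mem_ker, LinearMap.mem_range]
  constructor
  · intro h
    have hadj : ∀ a b, (SimpleGraph.fromEdgeSet (↑Z : Set (Sym2 V))).Reachable a b → p a = p b := by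
      rintro a b ⟨q⟩
      induction q with
      | nil => rfl
      | cons hab _ ih =>
        rw [← ih]
        rw [SimpleGraph.fromEdgeSet_adj] at hab
        have := hval p _ _ (mem_coe.1 hab.1)
        rw [h] at this
        exact (CharTwo.add_eq_zero.1 this.symm)
    refine ⟨fun c => SimpleGraph.ConnectedComponent.lift p ?_ c, ?_⟩
    · intro a b q _
      exact hadj a b ⟨q⟩
    · funext a
      rfl
  · rintro ⟨f, rfl⟩
    funext ⟨e, he⟩
    induction e with
    | _ a b =>
    have hab : a ≠ b := by rintro rfl; exact hd a he
    rw [hval]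
    have : (SimpleGraph.fromEdgeSet (↑Z : Set (Sym2 V))).connectedComponentMk a =
        (SimpleGraph.fromEdgeSet (↑Z : Set (Sym2 V))).connectedComponentMk b := by
      apply SimpleGraph.ConnectedComponent.sound
      apply SimpleGraph.Adj.reachable
      rw [SimpleGraph.fromEdgeSet_adj]
      exact ⟨mem_coe.2 he, hab⟩
    simp only [LinearMap.funLeft_apply, this]
    exact CharTwo.add_self_eq_zero _

lemma card_MM [CharP K 2] (Z : Finset (Sym2 V)) (hd : ∀ v, s(v, v) ∉ Z) :
    (MM K Z).card = Fintype.card K ^ (Z.card + comps Z - Fintype.card V) := by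
  rw [card_MM_ker]
  congr 1
  have h1 := LinearMap.finrank_range_add_finrank_ker (inc K Z).mulVecLin
  have h2 := LinearMap.finrank_range_add_finrank_ker (inc K Z).transpose.mulVecLin
  have h3 := Matrix.rank_transpose (inc K Z)
  have h4 : Module.finrank K (LinearMap.ker (inc K Z).transpose.mulVecLin) = comps Z := by
    rw [ker_transpose Z hd, LinearMap.finrank_range_of_inj]
    · rw [Module.finrank_fintype_fun_eq_card, comps, Nat.card_eq_fintype_card]
    · apply LinearMap.funLeft_injective_of_surjective
      exact Quot.mk_surjective
  unfold Matrix.rank at h3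
  rw [Module.finrank_fintype_fun_eq_card] at h1 h2
  rw [Fintype.card_coe] at h1
  omega

lemma NN_incl_excl [CharP K 2] (E : Finset (Sym2 V)) :
    (NN K E univ : ℤ) = ∑ Z ∈ E.powerset, (-1) ^ (E.card - Z.card) * ((MM K Z).card : ℤ) := by
  have hM : ∀ Z ∈ E.powerset, ((MM K Z).card : ℤ) =
      ∑ φ ∈ MM K E, ∏ e ∈ E \ Z, (if φ e = 0 then 1 else 0) := by
    intro Z hZ
    rw [mem_powerset] at hZ
    simp_rw [prod_ite_zero, prod_const_one]
    rw [sum_boole]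
    congr 2
    ext φ
    simp only [MM, mem_filter, mem_univ, true_and, mem_sdiff]
    constructor
    · rintro ⟨h1, h2⟩
      exact ⟨⟨fun e he => h1 e (fun h => he (hZ h)), h2⟩, fun e he => h1 e he.2⟩
    · rintro ⟨⟨h1, h2⟩, h3⟩
      refine ⟨fun e he => ?_, h2⟩
      by_cases h : e ∈ E
      · exact h3 e ⟨h, he⟩
      · exact h1 e h
  have hN : (NN K E univ : ℤ) = ∑ φ ∈ MM K E, ∏ e ∈ E, (1 + -(if φ e = 0 then (1 : ℤ) else 0)) := by
    have : ∀ φ : Sym2 V → K, ∏ e ∈ E, (1 + -(if φ e = 0 then (1 : ℤ) else 0)) =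
        if ∀ e ∈ E, φ e ≠ 0 then 1 else 0 := by
      intro φ
      have h1 := prod_ite_zero (s := E) (p := fun e => φ e ≠ 0) (f := fun _ => (1 : ℤ))
      rw [prod_const_one] at h1
      refine Eq.trans ?_ (h1.trans (by congr))
      apply prod_congr rfl
      intro e _
      by_cases h : φ e = 0 <;> simp [h]
    simp_rw [this]
    rw [sum_boole]
    unfold NN
    congr 2
    ext φ
    rw [mem_fl]
    simp only [MM, mem_filter, mem_univ, true_and, true_imp_iff]
    constructor
    · rintro ⟨h1, h2⟩
      exact ⟨⟨fun e he => by by_contra h; exact he ((h1 e).1 h), h2⟩, fun e he => (h1 e).2 he⟩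
    · rintro ⟨⟨h1, h2⟩, h3⟩
      exact ⟨fun e => ⟨fun h => by by_contra h'; exact h (h1 e h'), h3 e⟩, h2⟩
  rw [hN]
  simp_rw [prod_add, prod_const_one, one_mul, prod_neg]
  rw [sum_comm]
  apply sum_congr rfl
  intro Z hZ
  rw [hM Z hZ, ← mul_sum, card_sdiff_of_subset (mem_powerset.1 hZ)]

lemma NN_root [CharP K 2] (E : Finset (Sym2 V)) (hd : ∀ v, s(v, v) ∉ E) (w : V) :
    NN K E univ = NN K E (univ.erase w) := by
  unfold NN
  congr 1
  ext φ
  rw [mem_fl, mem_fl]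
  refine and_congr_right fun h1 => ⟨fun h v _ => h v (mem_univ _), fun h v _ => ?_⟩
  by_cases hvw : v = w
  · subst hvw
    have htot : ∑ u, ∑ y, φ s(u, y) = 0 := by
      rw [← sum_product']
      refine sum_involution (fun p _ => (p.2, p.1)) ?_ ?_ ?_ ?_
      · rintro ⟨a, b⟩ _
        simp only
        rw [(Sym2.eq_swap : s(b, a) = s(a, b))]
        exact CharTwo.add_self_eq_zero _
      · rintro ⟨a, b⟩ _ h0 heq
        simp only [Prod.mk.injEq] at heq
        obtain ⟨rfl, -⟩ := heq
        exact hd _ ((h1 _).1 h0)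
      · intros; simp
      · intros; rfl
    rw [← add_sum_erase _ _ (mem_univ v), sum_eq_zero h, add_zero] at htot
    exact htot
  · exact h v (mem_erase.2 ⟨hvw, mem_univ _⟩)

noncomputable def EE (G : SimpleGraph V) : Finset (Sym2 V) := G.edgeSet.toFinite.toFinset

lemma mem_EE {G : SimpleGraph V} {a b : V} : s(a, b) ∈ EE G ↔ G.Adj a b := by
  simp [EE]

lemma EE_nodiag (G : SimpleGraph V) : ∀ v, s(v, v) ∉ EE G := by
  intro v; rw [mem_EE]; exact G.loopless.irrefl v

lemma flow_eval [CharP K 2] (G : SimpleGraph V) (w : V) :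
    (flowPoly G).eval (Fintype.card K : ℤ) = NN K (EE G) (univ.erase w) := by
  rw [← NN_root _ (EE_nodiag G), NN_incl_excl]
  unfold flowPoly
  rw [eval_finsetSum]
  apply sum_congr rfl
  intro Z hZ
  rw [card_MM Z (fun v h => EE_nodiag G v (mem_powerset.1 hZ h))]
  simp only [eval_smul, eval_pow, eval_X, smul_eq_mul, comps, EE]
  push_cast
  rfl

end
end FlowAux

namespace FlowAux
open Finset Classical

set_option linter.unusedSectionVars false
set_option linter.unusedSimpArgs false
variable {V : Type} [Fintype V]

section
variable {G : SimpleGraph V}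

lemma cut3 (h3ec : ∀ S : Finset (Sym2 V), S.card ≤ 2 → (G.deleteEdges ↑S).Connected)
    {S : Finset V} {x y : V} (hx : x ∈ S) (hy : y ∉ S) : 3 ≤ tt (EE G) S Sᶜ := by
  by_contra hlt
  have hcard : (((S ×ˢ Sᶜ).filter (fun p => s(p.1, p.2) ∈ EE G)).image
      (fun p => s(p.1, p.2))).card ≤ 2 := by
    refine card_image_le.trans ?_
    rw [card_filter, sum_product]
    change tt (EE G) S Sᶜ ≤ 2
    omega
  obtain ⟨q⟩ := (h3ec _ hcard).preconnected x y
  obtain ⟨d, -, h1, h2⟩ := q.exists_boundary_dart (↑S : Set V) (by simpa using hx) (by simpa using hy)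
  have had := d.adj
  rw [SimpleGraph.deleteEdges_adj] at had
  apply had.2
  rw [mem_coe, mem_image]
  refine ⟨(d.fst, d.snd), ?_, rfl⟩
  rw [mem_filter, mem_product]
  exact ⟨⟨by simpa using h1, by simpa using h2⟩, mem_EE.2 had.1⟩

lemma nb_card (hcubic : ∀ v : V, Nat.card (G.neighborSet v) = 3) (v : V) :
    (nb (EE G) v).card = 3 := by
  rw [← hcubic v]
  have : G.neighborSet v = ↑(nb (EE G) v) := by
    ext y; simp [mem_nb, mem_EE]
  rw [this]
  simp

lemma tt_w (v : V) (S : Finset V) : tt (EE G) {v} S ≤ (nb (EE G) v).card := by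
  have : tt (EE G) {v} S = (S.filter (fun y => s(v, y) ∈ EE G)).card := by
    simp only [tt, sum_singleton, card_filter]
  rw [this]
  apply card_le_card
  intro y hy
  exact mem_nb.2 (mem_filter.1 hy).2

lemma cut2 (h3ec : ∀ S : Finset (Sym2 V), S.card ≤ 2 → (G.deleteEdges ↑S).Connected)
    (hcubic : ∀ v : V, Nat.card (G.neighborSet v) = 3) {w : V}
    {S : Finset V} (hS : S ⊆ univ.erase w) (h1 : S.Nonempty) (h2 : (univ.erase w \ S).Nonempty) :
    2 ≤ tt (EE G) S (univ.erase w \ S) := by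
  obtain ⟨x, hx⟩ := h1
  obtain ⟨y, hy⟩ := h2
  have hwS : w ∉ S := fun h => by simpa using hS h
  have hwT : w ∉ univ.erase w \ S := by simp
  have a1 := cut3 h3ec hx hwS
  have a2 := cut3 h3ec hy hwT
  have e1 : Sᶜ = (univ.erase w \ S) ∪ {w} := by
    ext a; simp only [mem_compl, mem_union, mem_sdiff, mem_erase, mem_singleton, mem_univ]; grind
  have e2 : (univ.erase w \ S)ᶜ = S ∪ {w} := by
    ext a; simp only [mem_compl, mem_union, mem_sdiff, mem_erase, mem_singleton, mem_univ]; grind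
  rw [e1, tt_union_right _ _ (by simp)] at a1
  rw [e2, tt_union_right _ _ (by simpa using hwS)] at a2
  have a3 := tt_w (G := G) w (S ∪ (univ.erase w \ S))
  rw [nb_card hcubic, tt_union_right _ _ disjoint_sdiff] at a3
  have c1 := tt_comm (EE G) S (univ.erase w \ S)
  have c2 := tt_comm (EE G) S {w}
  have c3 := tt_comm (EE G) (univ.erase w \ S) {w}
  omega

lemma G_ok (h3ec : ∀ S : Finset (Sym2 V), S.card ≤ 2 → (G.deleteEdges ↑S).Connected)
    (hcubic : ∀ v : V, Nat.card (G.neighborSet v) = 3) (w : V) :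
    Ok (EE G) (univ.erase w) := by
  refine ⟨EE_nodiag G, ?_, ?_, ?_, ?_⟩
  · intro x y h
    simp only [mem_erase, mem_univ, and_true]
    by_contra hc
    push Not at hc
    obtain ⟨rfl, rfl⟩ := hc
    exact EE_nodiag G _ h
  · intro v _; rw [nb_card hcubic]
  · intro S hS hne hneq
    have h2 := cut2 h3ec hcubic hS hne
      (by rw [sdiff_nonempty]; intro h; exact hneq (subset_antisymm hS h))
    by_contra hc
    push Not at hc
    have : tt (EE G) S (univ.erase w \ S) = 0 := by
      unfold tt
      apply sum_eq_zero; intro a ha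
      apply sum_eq_zero; intro b hb
      rw [if_neg (hc a ha b hb)]
    omega
  · have : (nb (EE G) w).Nonempty := by rw [← card_pos, nb_card hcubic]; simp
    obtain ⟨y, hy⟩ := this
    rw [mem_nb] at hy
    refine ⟨y, ?_, w, by simp, by rwa [Sym2.eq_swap]⟩
    simp only [mem_erase, mem_univ, and_true]
    rintro rfl
    exact EE_nodiag G _ hy

lemma G_qq (h3ec : ∀ S : Finset (Sym2 V), S.card ≤ 2 → (G.deleteEdges ↑S).Connected)
    (hcubic : ∀ v : V, Nat.card (G.neighborSet v) = 3) (w : V) :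
    QQ (EE G) (univ.erase w) := by
  obtain ⟨v, hv, -⟩ := (G_ok h3ec hcubic w).dang
  refine ⟨fun v _ => Or.inr (nb_card hcubic v), ⟨v, hv, nb_card hcubic v⟩, ?_, ?_⟩
  · have := cut3 h3ec hv (y := w) (by simp)
    omega
  · rintro S hS ⟨a, ha, -⟩ ⟨b, hb, -⟩
    exact ⟨cut2 h3ec hcubic hS ⟨a, ha⟩ ⟨b, hb⟩, cut3 h3ec ha (mem_sdiff.1 hb).2⟩

lemma two_m (hcubic : ∀ v : V, Nat.card (G.neighborSet v) = 3) :
    2 * (EE G).card = 3 * Fintype.card V := by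
  have h := G.sum_degrees_eq_twice_card_edges
  have h1 : ∀ v, G.degree v = 3 := by
    intro v
    rw [← hcubic v, Nat.card_eq_fintype_card, SimpleGraph.card_neighborSet_eq_degree]
  have h2 : G.edgeFinset = EE G := by
    ext e; simp [EE]
  rw [h2] at h
  simp only [h1, sum_const, smul_eq_mul, card_univ] at h
  omega

noncomputable def nul (Z : Finset (Sym2 V)) : ℕ := Z.card + comps Z - Fintype.card V

lemma comps_one (h3ec : ∀ S : Finset (Sym2 V), S.card ≤ 2 → (G.deleteEdges ↑S).Connected)
    {Z : Finset (Sym2 V)} (hZ : Z ⊆ EE G) (hc : (EE G).card ≤ Z.card + 2) : comps Z = 1 := by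
  have h := h3ec (EE G \ Z) (by rw [card_sdiff_of_subset hZ]; omega)
  have e : SimpleGraph.fromEdgeSet (↑Z : Set (Sym2 V)) = G.deleteEdges ↑(EE G \ Z) := by
    ext a b
    rw [SimpleGraph.fromEdgeSet_adj, SimpleGraph.deleteEdges_adj, mem_coe, mem_coe, mem_sdiff,
      mem_EE]
    constructor
    · rintro ⟨h1, h2⟩
      exact ⟨mem_EE.1 (hZ h1), fun h => h.2 h1⟩
    · rintro ⟨h1, h2⟩
      exact ⟨by by_contra h3; exact h2 ⟨h1, h3⟩, h1.ne⟩
  unfold comps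
  rw [e]
  have := h.preconnected.subsingleton_connectedComponent
  obtain ⟨v⟩ := h.nonempty
  rw [Nat.card_eq_one_iff_unique]
  exact ⟨this, ⟨SimpleGraph.connectedComponentMk _ v⟩⟩

lemma nul_mono {Z Z' : Finset (Sym2 V)} (h : Z ⊆ Z') (hd : ∀ v, s(v, v) ∉ Z') :
    nul Z ≤ nul Z' := by
  have h1 := card_MM (K := ZMod 2) Z (fun v hv => hd v (h hv))
  have h2 := card_MM (K := ZMod 2) Z' hd
  have h3 : (MM (ZMod 2) Z).card ≤ (MM (ZMod 2) Z').card := by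
    apply card_le_card
    intro φ hφ
    simp only [MM, mem_filter, mem_univ, true_and] at hφ ⊢
    exact ⟨fun e he => hφ.1 e (fun h' => he (h h')), hφ.2⟩
  rw [h1, h2, ZMod.card] at h3
  exact (Nat.pow_le_pow_iff_right (by norm_num)).1 h3

lemma nul_le (h3ec : ∀ S : Finset (Sym2 V), S.card ≤ 2 → (G.deleteEdges ↑S).Connected)
    {Z : Finset (Sym2 V)} (hZ : Z ⊆ EE G) (hc : Z.card + 2 ≤ (EE G).card) :
    nul Z ≤ (EE G).card - 1 - Fintype.card V := by
  obtain ⟨Z', h1, h2, h3⟩ := exists_subsuperset_card_eq hZ (n := (EE G).card - 2) (by omega)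
    (by omega)
  refine (nul_mono h1 (fun v hv => EE_nodiag G v (h2 hv))).trans ?_
  unfold nul
  rw [comps_one h3ec h2 (by omega)]
  omega

lemma flow_coeff (k : ℕ) : (flowPoly G).coeff k =
    ∑ Z ∈ (EE G).powerset, if k = nul Z then (-1 : ℤ) ^ ((EE G).card - Z.card) else 0 := by
  unfold flowPoly
  rw [finsetSum_coeff]
  apply sum_congr rfl
  intro Z _
  rw [coeff_smul, coeff_X_pow, smul_eq_mul, mul_ite, mul_one, mul_zero]
  rfl

lemma flow_coeffs (h3ec : ∀ S : Finset (Sym2 V), S.card ≤ 2 → (G.deleteEdges ↑S).Connected)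
    (hcubic : ∀ v : V, Nat.card (G.neighborSet v) = 3) {d : ℕ}
    (hd : d + 2 + Fintype.card V = (EE G).card + 1) :
    (∀ k, d + 2 < k → (flowPoly G).coeff k = 0) ∧ (flowPoly G).coeff (d + 2) = 1 ∧
      (flowPoly G).coeff (d + 1) = -((EE G).card : ℤ) := by
  have n0 : nul (EE G) = d + 2 := by
    unfold nul; rw [comps_one h3ec subset_rfl (by omega)]; omega
  have n1 : ∀ Z ⊆ EE G, Z.card + 1 = (EE G).card → nul Z = d + 1 := by
    intro Z hZ hc
    unfold nul; rw [comps_one h3ec hZ (by omega)]; omega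
  have n2 : ∀ Z ⊆ EE G, Z.card + 2 ≤ (EE G).card → nul Z ≤ d := by
    intro Z hZ hc
    have := nul_le h3ec hZ hc
    omega
  have htri : ∀ Z ⊆ EE G, Z = EE G ∨ Z.card + 1 = (EE G).card ∨ Z.card + 2 ≤ (EE G).card := by
    intro Z hZ
    by_cases h : Z = EE G
    · exact Or.inl h
    · have := card_lt_card (ssubset_of_subset_of_ne hZ h)
      omega
  refine ⟨?_, ?_, ?_⟩
  · intro k hk
    rw [flow_coeff]
    apply sum_eq_zero
    intro Z hZ
    rw [mem_powerset] at hZ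
    rw [if_neg]
    rcases htri Z hZ with h | h | h
    · rw [h, n0]; omega
    · rw [n1 Z hZ h]; omega
    · have := n2 Z hZ h; omega
  · rw [flow_coeff, sum_eq_single (EE G)]
    · rw [if_pos n0.symm]; simp
    · intro Z hZ hne
      rw [mem_powerset] at hZ
      rw [if_neg]
      rcases htri Z hZ with h | h | h
      · exact absurd h hne
      · rw [n1 Z hZ h]; omega
      · have := n2 Z hZ h; omega
    · intro h; simp at h
  · rw [flow_coeff]
    have hm : 1 ≤ (EE G).card := by
      have := two_m hcubic
      omega
    rw [← sum_subset (s₁ := powersetCard ((EE G).card - 1) (EE G))]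
    · have : ∀ Z ∈ powersetCard ((EE G).card - 1) (EE G),
          (if d + 1 = nul Z then (-1 : ℤ) ^ ((EE G).card - Z.card) else 0) = -1 := by
        intro Z hZ
        rw [mem_powersetCard] at hZ
        rw [if_pos (n1 Z hZ.1 (by omega)).symm, hZ.2]
        have : (EE G).card - ((EE G).card - 1) = 1 := by omega
        rw [this, pow_one]
      rw [sum_congr rfl this, sum_const, card_powersetCard, Nat.choose_symm hm, Nat.choose_one_right]
      simp
    · intro Z hZ
      rw [mem_powersetCard] at hZ
      exact mem_powerset.2 hZ.1
    · intro Z hZ hZ'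
      rw [mem_powerset] at hZ
      rw [mem_powersetCard] at hZ'
      rw [if_neg]
      rcases htri Z hZ with h | h | h
      · rw [h, n0]; omega
      · exact absurd ⟨hZ, by omega⟩ hZ'
      · have := n2 Z hZ h; omega

lemma flow_eq (h3ec : ∀ S : Finset (Sym2 V), S.card ≤ 2 → (G.deleteEdges ↑S).Connected)
    (hcubic : ∀ v : V, Nat.card (G.neighborSet v) = 3) (w : V) :
    ∃ (g : ℕ[X]) (c : ℤ), (c = 1 ∨ c = -1) ∧ 1 ≤ g.coeff 0 ∧
      flowPoly G = C c * ((X - 1) * (X - 2) * (g.map (Nat.castRingHom ℤ)).comp (2 - X)) := by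
  have hOk := G_ok h3ec hcubic w
  have hQ := G_qq h3ec hcubic w
  obtain ⟨g, hg, -, hgQ⟩ := main_ind _ _ _ rfl hOk
  have h1 := hgQ hQ
  obtain ⟨v, hv, -⟩ := hOk.dang
  have h0 := hg.coeff_zero hv (nb_card hcubic v)
  have hX : X * g.divX = g := by
    have := X_mul_divX_add g
    rw [h0] at this
    simpa using this
  refine ⟨g.divX, -(-1) ^ ((EE G).card + (univ.erase w).card + 1), ?_, ?_, ?_⟩
  · rcases neg_one_pow_eq_or ℤ ((EE G).card + (univ.erase w).card + 1) with h | h <;> rw [h] <;> simp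
  · rw [coeff_divX]; exact h1
  · apply eq_of_infinite_eval_eq
    refine Set.Infinite.mono (s := Set.range (fun k : ℕ => (2 : ℤ) ^ (k + 1))) ?_
      (Set.infinite_range_of_injective ?_)
    · rintro _ ⟨k, rfl⟩
      rw [Set.mem_ofPred_eq]
      let K := GaloisField 2 (k + 1)
      haveI : Fintype K := Fintype.ofFinite K
      have hK : (Fintype.card K : ℤ) = 2 ^ (k + 1) := by
        rw [← Nat.card_eq_fintype_card, GaloisField.card 2 (k + 1) (by omega)]
        simp
      have e1 := flow_eval (K := K) G w
      have e2 := hg K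
      rw [← hX] at e2
      rw [← e1] at e2
      rw [hK] at e2
      rw [map_mul, aeval_X] at e2
      have e3 : eval (2 - (2 : ℤ) ^ (k + 1)) (g.divX.map (Nat.castRingHom ℤ)) =
          aeval (2 - (2 : ℤ) ^ (k + 1)) g.divX := by
        rw [aeval_def, eval_map]; rfl
      simp only [eval_mul, eval_C, eval_comp, eval_sub, eval_X, eval_one, eval_ofNat]
      rw [e3]
      generalize aeval (2 - (2 : ℤ) ^ (k + 1)) g.divX = z at *
      generalize eval ((2 : ℤ) ^ (k + 1)) (flowPoly G) = f at *
      generalize (2 : ℤ) ^ (k + 1) = t at *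
      rcases neg_one_pow_eq_or ℤ ((EE G).card + (univ.erase w).card + 1) with h | h
      · rw [h] at e2 ⊢; linear_combination e2
      · rw [h] at e2 ⊢; linear_combination -e2
    · intro a b h
      have := Int.pow_right_injective (a := 2) (by norm_num) h
      omega

end
end FlowAux

namespace FlowAux
open Finset Classical

set_option linter.unusedSectionVars false
set_option linter.unusedSimpArgs false

lemma prod_le_exp (s : Multiset ℝ) (h : ∀ u ∈ s, 0 ≤ u) :
    0 ≤ s.prod ∧ s.prod ≤ Real.exp (s.sum - s.card) := by
  induction s using Multiset.induction_on with
  | empty => simp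
  | cons a s ih =>
    obtain ⟨h1, h2⟩ := ih (fun u hu => h u (Multiset.mem_cons_of_mem hu))
    have ha := h a (Multiset.mem_cons_self a s)
    rw [Multiset.prod_cons, Multiset.sum_cons, Multiset.card_cons]
    refine ⟨mul_nonneg ha h1, ?_⟩
    have e : a + s.sum - ((s.card + 1 : ℕ) : ℝ) = (a - 1) + (s.sum - s.card) := by
      push_cast; ring
    rw [e, Real.exp_add]
    apply mul_le_mul _ h2 h1 (Real.exp_pos _).le
    have := Real.add_one_le_exp (a - 1)
    linarith

lemma all_one (s : Multiset ℝ) (h : ∀ u ∈ s, 0 ≤ u) (hs : s.sum = s.card) (hp : 1 ≤ s.prod) :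
    ∀ u ∈ s, u = 1 := by
  intro u hu
  by_contra hne
  obtain ⟨t, rfl⟩ := Multiset.exists_cons_of_mem hu
  obtain ⟨h1, h2⟩ := prod_le_exp t (fun u hu => h u (Multiset.mem_cons_of_mem hu))
  rw [Multiset.prod_cons] at hp
  rw [Multiset.sum_cons, Multiset.card_cons] at hs
  push_cast at hs
  have hu0 := h u hu
  have e : t.sum - t.card = -(u - 1) := by linarith
  rw [e] at h2
  have h3 := Real.add_one_lt_exp (x := u - 1) (sub_ne_zero.2 hne)
  have h4 : Real.exp (u - 1) * Real.exp (-(u - 1)) = 1 := by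
    rw [← Real.exp_add]; simp
  have h5 : u * t.prod ≤ u * Real.exp (-(u - 1)) := mul_le_mul_of_nonneg_left h2 hu0
  have h6 : u * Real.exp (-(u - 1)) < Real.exp (u - 1) * Real.exp (-(u - 1)) :=
    mul_lt_mul_of_pos_right (by linarith) (Real.exp_pos _)
  linarith

lemma eval_ge (g : ℕ[X]) (x : ℝ) (hx : 0 ≤ x) :
    (g.coeff 0 : ℝ) ≤ (g.map (Nat.castRingHom ℝ)).eval x := by
  rw [eval_eq_sum_range, Finset.sum_range_succ']
  simp only [coeff_map, pow_zero, mul_one]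
  have : 0 ≤ ∑ i ∈ Finset.range (g.map (Nat.castRingHom ℝ)).natDegree,
      (Nat.castRingHom ℝ) (g.coeff (i + 1)) * x ^ (i + 1) := by
    apply Finset.sum_nonneg
    intro i _
    apply mul_nonneg
    · simp
    · positivity
  simpa using this

/-- the analytic part -/
lemma final (p q : ℝ[X]) (d m : ℕ) (hpq : p = (X - C 1) * (X - C 2) * q)
    (hdeg : ∀ k, d + 2 < k → p.coeff k = 0) (h1 : p.coeff (d + 2) = 1)
    (h2 : p.coeff (d + 1) = -(m : ℝ)) (hm : m = 3 * d + 3)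
    (hq : ∀ x ≤ 2, 1 ≤ |q.eval x|)
    (hreal : ∀ z : ℂ, (p.map Complex.ofRealHom).IsRoot z → z.im = 0) :
    Polynomial.rootMultiplicity 1 p = 1 ∧ Polynomial.rootMultiplicity 2 p = 1 ∧
      ∀ x : ℝ, p.IsRoot x → x ≠ 1 → x ≠ 2 → 5 / 2 < x := by
  have hnd : p.natDegree = d + 2 := by
    apply le_antisymm
    · rw [natDegree_le_iff_coeff_eq_zero]
      exact fun k hk => hdeg k hk
    · apply le_natDegree_of_ne_zero; rw [h1]; exact one_ne_zero
  have hpm : p.Monic := by rw [Monic, leadingCoeff, hnd, h1]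
  have hlm : ((X - C 1) * (X - C 2) : ℝ[X]).Monic := (monic_X_sub_C 1).mul (monic_X_sub_C 2)
  have hqm : q.Monic := by rw [hpq] at hpm; exact hlm.of_mul_monic_left hpm
  have hqd : q.natDegree = d := by
    have := hlm.natDegree_mul hqm
    rw [← hpq, hnd, (monic_X_sub_C 1).natDegree_mul (monic_X_sub_C 2), natDegree_X_sub_C,
      natDegree_X_sub_C] at this
    omega
  have hnext : q.nextCoeff = 3 - m := by
    have := hlm.nextCoeff_mul hqm
    rw [← hpq, (monic_X_sub_C 1).nextCoeff_mul (monic_X_sub_C 2), nextCoeff_X_sub_C,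
      nextCoeff_X_sub_C, nextCoeff_of_natDegree_pos (by omega), hnd] at this
    have e : d + 2 - 1 = d + 1 := by omega
    rw [e, h2] at this
    linarith
  have hqs : q.Splits := by
    refine Splits.of_splits_map Complex.ofRealHom (IsAlgClosed.splits _) ?_
    intro z hz
    have hz' := isRoot_of_mem_roots hz
    have := hreal z (by
      rw [hpq, Polynomial.map_mul, IsRoot.def, eval_mul, hz'.eq_zero, mul_zero])
    exact ⟨z.re, Complex.ext (by simp) (by simp [this])⟩
  have hcard : q.roots.card = d := by rw [← hqs.natDegree_eq_card_roots, hqd]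
  have hsum : q.roots.sum = m - 3 := by
    have := hqs.nextCoeff_eq_neg_sum_roots_of_monic hqm
    linarith
  have hnot : ∀ x ≤ 2, ¬ q.IsRoot x := by
    intro x hx h
    have := hq x hx
    rw [h.eq_zero, abs_zero] at this
    linarith
  have hge : ∀ r ∈ q.roots, 2 < r := by
    intro r hr
    by_contra h
    exact hnot r (not_lt.1 h) (isRoot_of_mem_roots hr)
  have hprod : (1 : ℝ) ≤ (q.roots.map (fun r => r - 2)).prod := by
    have e := hqs.eval_eq_prod_roots_of_monic hqm 2
    have h := hq 2 le_rfl
    rw [e] at h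
    have e2 : (q.roots.map (fun r => (2 : ℝ) - r)).prod =
        (-1) ^ q.roots.card * (q.roots.map (fun r => r - 2)).prod := by
      have : (fun r : ℝ => (2 : ℝ) - r) = fun r => (-1) * (r - 2) := by funext r; ring
      rw [this, Multiset.prod_map_mul]
      simp
    rw [e2, abs_mul, abs_pow, abs_neg, abs_one, one_pow, one_mul, abs_of_nonneg] at h
    · exact h
    · apply Multiset.prod_nonneg
      intro a ha
      obtain ⟨r, hr, rfl⟩ := Multiset.mem_map.1 ha
      have := hge r hr
      linarith
  have hall := all_one (q.roots.map (fun r => r - 2)) (by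
      intro a ha
      obtain ⟨r, hr, rfl⟩ := Multiset.mem_map.1 ha
      have := hge r hr
      linarith) (by
      rw [Multiset.sum_map_sub, Multiset.map_id', hsum, Multiset.card_map, hcard, hm]
      simp [hcard]
      ring) hprod
  have hq0 : q ≠ 0 := hqm.ne_zero
  have hp0 : p ≠ 0 := hpm.ne_zero
  have hp0' := hp0
  rw [hpq] at hp0'
  refine ⟨?_, ?_, ?_⟩
  · rw [hpq, rootMultiplicity_mul hp0', rootMultiplicity_mul hlm.ne_zero,
      rootMultiplicity_X_sub_C_self, rootMultiplicity_eq_zero (p := q) (hnot 1 (by norm_num)),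
      rootMultiplicity_eq_zero]
    norm_num
  · rw [hpq, rootMultiplicity_mul hp0', rootMultiplicity_mul hlm.ne_zero,
      rootMultiplicity_X_sub_C_self, rootMultiplicity_eq_zero (p := q) (hnot 2 (by norm_num)),
      rootMultiplicity_eq_zero]
    norm_num
  · intro x hx hx1 hx2
    rw [hpq, IsRoot.def, eval_mul, eval_mul, eval_sub, eval_sub, eval_X, eval_C, eval_C] at hx
    have hxq : eval x q = 0 := by
      rcases mul_eq_zero.1 hx with h | h
      · rcases mul_eq_zero.1 h with h | h
        · exact absurd (sub_eq_zero.1 h) hx1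
        · exact absurd (sub_eq_zero.1 h) hx2
      · exact h
    have := hall (x - 2) (Multiset.mem_map.2 ⟨x, (mem_roots hq0).2 hxq, rfl⟩)
    linarith

end FlowAux

theorem stmt_10 {V : Type} [Fintype V] (G : SimpleGraph V)
    (hconn : G.Connected)
    (h3ec : ∀ S : Finset (Sym2 V), S.card ≤ 2 → (G.deleteEdges ↑S).Connected)
    (hcubic : ∀ v : V, Nat.card (G.neighborSet v) = 3)
    (hreal : ∀ z : ℂ, ((flowPoly G).map (Int.castRingHom ℂ)).IsRoot z → z.im = 0)
    (p : Polynomial ℝ) (hp : p = (flowPoly G).map (Int.castRingHom ℝ)) :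
    Polynomial.rootMultiplicity 1 p = 1 ∧ Polynomial.rootMultiplicity 2 p = 1 ∧
      ∀ x : ℝ, p.IsRoot x → x ≠ 1 → x ≠ 2 → 5 / 2 < x := by
  obtain ⟨w⟩ := hconn.nonempty
  have h2m := FlowAux.two_m hcubic
  have hn : 0 < Fintype.card V := Fintype.card_pos_iff.2 ⟨w⟩
  obtain ⟨d, hd⟩ : ∃ d, d + 2 + Fintype.card V = (FlowAux.EE G).card + 1 :=
    ⟨(FlowAux.EE G).card - 1 - Fintype.card V, by omega⟩
  obtain ⟨c1, c2, c3⟩ := FlowAux.flow_coeffs h3ec hcubic hd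
  obtain ⟨g, c, hc, hg, hfl⟩ := FlowAux.flow_eq h3ec hcubic w
  refine FlowAux.final p (C (c : ℝ) * (g.map (Nat.castRingHom ℝ)).comp (2 - X)) d
    (FlowAux.EE G).card ?_ ?_ ?_ ?_ (by omega) ?_ ?_
  · rw [hp, hfl]
    have hcomp : (Int.castRingHom ℝ).comp (Nat.castRingHom ℤ) = Nat.castRingHom ℝ :=
      Subsingleton.elim _ _
    simp only [Polynomial.map_mul, Polynomial.map_comp, Polynomial.map_sub, map_X, map_C,
      Polynomial.map_one, Polynomial.map_ofNat, map_map, hcomp, C_1]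
    simp only [eq_intCast]
    have : (C 2 : ℝ[X]) = 2 := rfl
    rw [this]
    ring
  · intro k hk
    rw [hp, coeff_map, c1 k hk]; simp
  · rw [hp, coeff_map, c2]; simp
  · rw [hp, coeff_map, c3]; simp
  · intro x hx
    have h1 := FlowAux.eval_ge g (2 - x) (by linarith)
    have h2 : (1 : ℝ) ≤ g.coeff 0 := by exact_mod_cast hg
    have h3 : |(c : ℝ)| = 1 := by rcases hc with rfl | rfl <;> simp
    rw [eval_mul, eval_C, eval_comp, abs_mul, h3, one_mul]
    simp only [eval_sub, eval_X, eval_ofNat]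
    exact (h2.trans h1).trans (le_abs_self _)
  · intro z hz
    apply hreal z
    rw [hp, map_map] at hz
    have : Complex.ofRealHom.comp (Int.castRingHom ℝ) = Int.castRingHom ℂ :=
      RingHom.ext_int _ _
    rwa [this] at hz
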